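/- Let R be a commutative ring, n ≥ 4, and a ∈ R non-nilpotent. Then the restriction of μ_* : St(n, R⋉XR_a[X]) → St(n, R_a[X]) to the relative subgroup is a group isomorphism St(n, R⋉XR_a[X], XR_a[X]) ≅ St(n, R_a[X], XR_a[X]). -/

import Mathlib

/-- Generators of the Steinberg group: triples (i,j,r) with i ≠ j. -/
abbrev StGen (n : ℕ) (R : Type) : Type := {p : Fin n × Fin n // p.1 ≠ p.2} × R

open scoped commutatorElement

/-- The Steinberg relations. -/
inductive StRels (n : ℕ) (R : Type) [CommRing R] : FreeGroup (StGen n R) → Prop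
  | add (i j : Fin n) (hij : i ≠ j) (r s : R) :
      StRels n R (FreeGroup.of (⟨(i, j), hij⟩, r) * FreeGroup.of (⟨(i, j), hij⟩, s) *
        (FreeGroup.of (⟨(i, j), hij⟩, r + s))⁻¹)
  | commZero (i j h k : Fin n) (hij : i ≠ j) (hhk : h ≠ k) (hjh : j ≠ h) (hik : i ≠ k) (r s : R) :
      StRels n R ⁅(FreeGroup.of (⟨(i, j), hij⟩, r) : FreeGroup (StGen n R)), FreeGroup.of (⟨(h, k), hhk⟩, s)⁆
  | commAdd (i j k : Fin n) (hij : i ≠ j) (hjk : j ≠ k) (hik : i ≠ k) (r s : R) :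
      StRels n R (⁅(FreeGroup.of (⟨(i, j), hij⟩, r) : FreeGroup (StGen n R)), FreeGroup.of (⟨(j, k), hjk⟩, s)⁆ *
        (FreeGroup.of (⟨(i, k), hik⟩, r * s))⁻¹)

/-- The Steinberg group `St(n, R)`. -/
abbrev SteinbergGroup (n : ℕ) (R : Type) [CommRing R] : Type :=
  PresentedGroup {w | StRels n R w}

/-- The generator `x_{ij}(r)` of the Steinberg group. -/
def stx (n : ℕ) (R : Type) [CommRing R] (i j : Fin n) (hij : i ≠ j) (r : R) :
    SteinbergGroup n R :=
  PresentedGroup.of (⟨(i, j), hij⟩, r)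

/-- The fiber product ring `R ⋉ XR_a[X] = {(r, h) : h(0) = λ_a r}`. -/
def fiberRing (R : Type) [CommRing R] (a : R) :
    Subring (R × Polynomial (Localization.Away a)) where
  carrier := {p | Polynomial.eval 0 p.2 = algebraMap R (Localization.Away a) p.1}
  zero_mem' := by simp
  one_mem' := by simp
  add_mem' := by
    intro x y hx hy
    simp only [Set.mem_setOf_eq, Prod.snd_add, Polynomial.eval_add, Prod.fst_add, map_add] at *
    rw [hx, hy]
  neg_mem' := by
    intro x hx
    simp only [Set.mem_setOf_eq, Prod.snd_neg, Polynomial.eval_neg, Prod.fst_neg, map_neg] at *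
    rw [hx]
  mul_mem' := by
    intro x y hx hy
    simp only [Set.mem_setOf_eq, Prod.snd_mul, Polynomial.eval_mul, Prod.fst_mul, map_mul] at *
    rw [hx, hy]

/-!
Write `A = R ⋉ XR_a[X]`, `C = R_a[X]` and `J = XR_a[X]`. Then `C` is a localisation of `A`, and `J`
is an ideal of both rings. For `n ≥ 4` the transvection `1 + u vᵀ` has a lift to `St(n, A)` whenever
`v` is a combination of the Koszul syzygies `uⱼ eᵢ - uᵢ eⱼ` of `u`, and this lift is natural,
additive in the coefficients, and invariant under passing from `(t u, w)` to `(u, t² w)`. Since `J`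
absorbs denominators, the lift still makes sense in `St(n, A)` when `u` has entries in `C` and the
coefficients lie in `J`. Each frame `h ∈ GL(n, C)` and `s ∈ J` thus yield an element of `St(n, A)`
standing for `h x_{ij}(s) h⁻¹`.

Let `ε : C → C` be the idempotent `f ↦ f(0)` with kernel `J`. Sending `x_{ij}(c)` to the function
`h ↦ h x_{ij}(c - ε c) h⁻¹` together with the matrix `1 + ε(c) Eᵢⱼ` respects the Steinberg
relations, so it defines a homomorphism from `St(n, C)` to the wreath product of `St(n, A)` and
`GL(n, C)`. Evaluating its function component at `h = 1` inverts `μ_*` on the relative subgroups.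
-/

namespace SteinbergGroup

/-! ### Generators -/

section Generators

theorem conj_eq_self_iff_commute {G : Type*} [Group G] {g x : G} :
    MulAut.conj g x = x ↔ Commute g x := by
  rw [MulAut.conj_apply, mul_inv_eq_iff_eq_mul, commute_iff_eq]

theorem pi_single_induction_of_eq_zero_on {n : ℕ} {A : Type*} [AddCommMonoid A]
    (s : Set (Fin n)) {P : (Fin n → A) → Prop} {v : Fin n → A} (hv : ∀ m ∈ s, v m = 0) (zero : P 0)
    (add : ∀ u v, (∀ m ∈ s, u m = 0) → (∀ m ∈ s, v m = 0) → P u → P v → P (u + v))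
    (single : ∀ m ∉ s, ∀ r, P (Pi.single m r)) : P v := by
  suffices (∀ m ∈ s, v m = 0) ∧ P v from this.2
  rw [← Finset.univ_sum_single v]
  refine Finset.sum_induction _ (fun v ↦ (∀ m ∈ s, v m = 0) ∧ P v) ?_ ⟨by simp, zero⟩ fun m _ ↦ ?_
  · rintro u v ⟨hu, hPu⟩ ⟨hv, hPv⟩
    exact ⟨fun m hm ↦ by rw [Pi.add_apply, hu m hm, hv m hm, add_zero], add u v hu hv hPu hPv⟩
  by_cases hm : m ∈ s
  · rw [hv m hm, Pi.single_zero]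
    exact ⟨by simp, zero⟩
  · exact ⟨fun i hi ↦ Pi.single_eq_of_ne (ne_of_mem_of_not_mem hi hm) _, single m hm _⟩

variable {n : ℕ} {A : Type} [CommRing A] {G : Type*} [Group G]

theorem stx_mul_stx (i j : Fin n) (h : i ≠ j) (r s : A) :
    stx n A i j h r * stx n A i j h s = stx n A i j h (r + s) := by
  have rel := PresentedGroup.one_of_mem (rels := {w | StRels n A w})
    (StRels.add i j h r s)
  rwa [map_mul, map_inv, mul_inv_eq_one, map_mul] at rel

theorem commute_stx {i j h k : Fin n} (hij : i ≠ j) (hhk : h ≠ k) (hjh : j ≠ h) (hik : i ≠ k)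
    (r s : A) : Commute (stx n A i j hij r) (stx n A h k hhk s) := by
  have rel := PresentedGroup.one_of_mem (rels := {w | StRels n A w})
    (StRels.commZero i j h k hij hhk hjh hik r s)
  rwa [map_commutatorElement, commutatorElement_eq_one_iff_commute] at rel

theorem commutator_stx {i j k : Fin n} (hij : i ≠ j) (hjk : j ≠ k) (hik : i ≠ k) (r s : A) :
    ⁅stx n A i j hij r, stx n A j k hjk s⁆ = stx n A i k hik (r * s) := by
  have rel := PresentedGroup.one_of_mem (rels := {w | StRels n A w})
    (StRels.commAdd i j k hij hjk hik r s)
  rwa [map_mul, map_inv, mul_inv_eq_one, map_commutatorElement] at rel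

/-- The root element `x_{ij}(r)`, extended by the value `1` to the diagonal `i = j`. -/
def root (i j : Fin n) (r : A) : SteinbergGroup n A :=
  if h : i ≠ j then stx n A i j h r else 1

theorem root_of_ne {i j : Fin n} (h : i ≠ j) (r : A) : root i j r = stx n A i j h r :=
  dif_pos h

@[simp] theorem root_self (i : Fin n) (r : A) : root i i r = 1 :=
  dif_neg (not_not.2 rfl)

theorem root_add (i j : Fin n) (r s : A) : root i j (r + s) = root i j r * root i j s := by
  rcases eq_or_ne i j with rfl | h
  · simp
  · simp only [root_of_ne h, stx_mul_stx]

@[simp] theorem root_zero (i j : Fin n) : root i j (0 : A) = 1 := by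
  have h := root_add i j (0 : A) 0
  rwa [add_zero, left_eq_mul] at h

theorem root_neg (i j : Fin n) (r : A) : root i j (-r) = (root i j r)⁻¹ :=
  eq_inv_of_mul_eq_one_left <| by rw [← root_add, neg_add_cancel, root_zero]

theorem commute_root {i j h k : Fin n} (hjh : j ≠ h) (hik : i ≠ k) (r s : A) :
    Commute (root i j r) (root h k s) := by
  unfold root
  split_ifs with hij hhk
  · exact commute_stx hij hhk hjh hik r s
  all_goals simp

theorem commutator_root {i j k : Fin n} (hij : i ≠ j) (hjk : j ≠ k) (hik : i ≠ k) (r s : A) :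
    ⁅root i j r, root j k s⁆ = root i k (r * s) := by
  rw [root_of_ne hij, root_of_ne hjk, root_of_ne hik, commutator_stx]

attribute [irreducible] root

theorem induction_on {P : SteinbergGroup n A → Prop} (z : SteinbergGroup n A) (one : P 1)
    (root : ∀ i j, i ≠ j → ∀ r, P (root i j r)) (mul : ∀ x y, P x → P y → P (x * y)) : P z := by
  have hz : z ∈ Subgroup.closure (Set.range (PresentedGroup.of (rels := {w | StRels n A w}))) := by
    rw [PresentedGroup.closure_range_of]
    trivial
  induction hz using Subgroup.closure_induction'' with
  | mem x hx =>
    obtain ⟨⟨⟨⟨i, j⟩, h⟩, r⟩, rfl⟩ := hx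
    change P (stx n A i j h r)
    exact root_of_ne h r ▸ root i j h r
  | inv_mem x hx =>
    obtain ⟨⟨⟨⟨i, j⟩, h⟩, r⟩, rfl⟩ := hx
    have hinv : (stx n A i j h r)⁻¹ = SteinbergGroup.root i j (-r) := by
      rw [root_neg, root_of_ne h]
    exact hinv ▸ root i j h (-r)
  | one => exact one
  | mul x y _ _ hx hy => exact mul x y hx hy

theorem hom_ext {f g : SteinbergGroup n A →* G}
    (h : ∀ i j, i ≠ j → ∀ r, f (root i j r) = g (root i j r)) : f = g := by
  refine MonoidHom.ext fun z ↦ ?_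
  induction z using induction_on with
  | one => rw [map_one, map_one]
  | root i j hij r => exact h i j hij r
  | mul x y hx hy => rw [map_mul, map_mul, hx, hy]

/-- The universal property of the Steinberg group: a family of elements satisfying the Steinberg
relations defines a homomorphism. -/
def lift (x : Fin n → Fin n → A → G)
    (hadd : ∀ i j, i ≠ j → ∀ r s, x i j r * x i j s = x i j (r + s))
    (hcomm : ∀ i j h k, i ≠ j → h ≠ k → j ≠ h → i ≠ k → ∀ r s, Commute (x i j r) (x h k s))
    (hrel : ∀ i j k, i ≠ j → j ≠ k → i ≠ k → ∀ r s, ⁅x i j r, x j k s⁆ = x i k (r * s)) :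
    SteinbergGroup n A →* G :=
  PresentedGroup.toGroup (f := fun g ↦ x g.1.1.1 g.1.1.2 g.2) <| by
    rintro _ (⟨i, j, hij, r, s⟩ | ⟨i, j, h, k, hij, hhk, hjh, hik, r, s⟩ |
      ⟨i, j, k, hij, hjk, hik, r, s⟩)
    · simp only [map_mul, map_inv, FreeGroup.lift_apply_of, hadd i j hij, mul_inv_cancel]
    · simp only [map_commutatorElement, FreeGroup.lift_apply_of]
      exact commutatorElement_eq_one_iff_commute.2 (hcomm i j h k hij hhk hjh hik r s)
    · simp only [map_mul, map_inv, map_commutatorElement, FreeGroup.lift_apply_of,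
        hrel i j k hij hjk hik, mul_inv_cancel]

theorem lift_root (x : Fin n → Fin n → A → G) (hadd hcomm hrel) {i j : Fin n} (h : i ≠ j) (r : A) :
    lift x hadd hcomm hrel (root i j r) = x i j r := by
  rw [root_of_ne h]
  exact PresentedGroup.toGroup.of _

/-- The automorphism of the Steinberg group that lifts `g ↦ (gᵀ)⁻¹`; it exchanges the roles of rows
and columns. -/
def transposeInv : SteinbergGroup n A →* SteinbergGroup n A :=
  lift (fun i j r ↦ root j i (-r)) (fun i j _ r s ↦ by rw [← root_add, neg_add])
    (fun i j h k _ _ hjh hik r s ↦ commute_root hik hjh _ _)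
    (fun i j k hij hjk hik r s ↦ by
      rw [← commutatorElement_inv, commutator_root hjk.symm hij.symm hik.symm, ← root_neg,
        neg_mul_neg, mul_comm])

theorem transposeInv_root (i j : Fin n) (r : A) : transposeInv (root i j r) = root j i (-r) := by
  rcases eq_or_ne i j with rfl | h
  · simp
  · exact lift_root _ _ _ _ h r

end Generators

/-! ### Row and column unipotents -/

section RowCol

variable {n : ℕ} {A : Type} [CommRing A]

/-- `r ↦ x_{ij}(r)` as a homomorphism from the additive group. -/
def rootHom (i j : Fin n) : Multiplicative A →* SteinbergGroup n A where
  toFun r := root i j r.toAdd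
  map_one' := root_zero i j
  map_mul' r s := root_add i j r.toAdd s.toAdd

theorem pairwise_commute_rootHom_left (k : Fin n) :
    Pairwise fun i j ↦ ∀ x y : Multiplicative A, Commute (rootHom i k x) (rootHom j k y) := by
  intro i j _ x y
  rcases eq_or_ne i k with rfl | hi
  · simp [rootHom]
  rcases eq_or_ne j k with rfl | hj
  · simp [rootHom]
  exact commute_root hj.symm hi _ _

theorem pairwise_commute_rootHom_right (k : Fin n) :
    Pairwise fun i j ↦ ∀ x y : Multiplicative A, Commute (rootHom k i x) (rootHom k j y) := by
  intro i j _ x y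
  rcases eq_or_ne i k with rfl | hi
  · simp [rootHom]
  rcases eq_or_ne j k with rfl | hj
  · simp [rootHom]
  exact commute_root hi hj.symm _ _

/-- The column unipotent `∏ i, x_{ik}(uᵢ)`, which lifts the matrix `1 + u eₖᵀ` when `uₖ = 0`; the
coordinate `uₖ` is ignored. -/
def col (k : Fin n) (u : Fin n → A) : SteinbergGroup n A :=
  MonoidHom.noncommPiCoprod _ (pairwise_commute_rootHom_left k) fun i ↦ Multiplicative.ofAdd (u i)

/-- The row unipotent `∏ i, x_{ki}(vᵢ)`, which lifts the matrix `1 + eₖ vᵀ` when `vₖ = 0`; the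
coordinate `vₖ` is ignored. -/
def row (k : Fin n) (v : Fin n → A) : SteinbergGroup n A :=
  MonoidHom.noncommPiCoprod _ (pairwise_commute_rootHom_right k) fun i ↦ Multiplicative.ofAdd (v i)

theorem col_add (k : Fin n) (u v : Fin n → A) : col k (u + v) = col k u * col k v :=
  map_mul (MonoidHom.noncommPiCoprod _ (pairwise_commute_rootHom_left k)) _ _

theorem row_add (k : Fin n) (u v : Fin n → A) : row k (u + v) = row k u * row k v :=
  map_mul (MonoidHom.noncommPiCoprod _ (pairwise_commute_rootHom_right k)) _ _

@[simp] theorem col_zero (k : Fin n) : col k (0 : Fin n → A) = 1 :=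
  map_one (MonoidHom.noncommPiCoprod _ (pairwise_commute_rootHom_left k))

@[simp] theorem row_zero (k : Fin n) : row k (0 : Fin n → A) = 1 :=
  map_one (MonoidHom.noncommPiCoprod _ (pairwise_commute_rootHom_right k))

theorem col_single (k m : Fin n) (r : A) : col k (Pi.single m r) = root m k r :=
  MonoidHom.noncommPiCoprod_mulSingle (N := fun _ ↦ Multiplicative A)
    (hcomm := pairwise_commute_rootHom_left k)
    (fun i ↦ rootHom i k) m (Multiplicative.ofAdd r)

theorem row_single (k m : Fin n) (r : A) : row k (Pi.single m r) = root k m r :=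
  MonoidHom.noncommPiCoprod_mulSingle (N := fun _ ↦ Multiplicative A)
    (hcomm := pairwise_commute_rootHom_right k)
    (fun i ↦ rootHom k i) m (Multiplicative.ofAdd r)

theorem col_neg (k : Fin n) (u : Fin n → A) : col k (-u) = (col k u)⁻¹ :=
  eq_inv_of_mul_eq_one_left <| by rw [← col_add, neg_add_cancel, col_zero]

theorem row_neg (k : Fin n) (u : Fin n → A) : row k (-u) = (row k u)⁻¹ :=
  eq_inv_of_mul_eq_one_left <| by rw [← row_add, neg_add_cancel, row_zero]

attribute [irreducible] col row

theorem col_congr {k : Fin n} {u v : Fin n → A} (h : ∀ i ≠ k, u i = v i) : col k u = col k v := by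
  have huv : u = v + Pi.single k (u k - v k) := by
    ext i
    rcases eq_or_ne i k with rfl | hi
    · simp
    · simp [hi, h i hi]
  rw [huv, col_add, col_single, root_self, mul_one]

theorem transposeInv_row (k : Fin n) (v : Fin n → A) : transposeInv (row k v) = col k (-v) := by
  induction v using Pi.single_induction with
  | zero => simp
  | add u v hu hv => rw [row_add, map_mul, hu, hv, ← col_add, neg_add]
  | single m r => rw [row_single, transposeInv_root, ← Pi.single_neg, col_single]

theorem transposeInv_col (k : Fin n) (u : Fin n → A) : transposeInv (col k u) = row k (-u) := by
  induction u using Pi.single_induction with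
  | zero => simp
  | add u v hu hv => rw [col_add, map_mul, hu, hv, ← row_add, neg_add]
  | single m r => rw [col_single, transposeInv_root, ← Pi.single_neg, row_single]

end RowCol

/-! ### Conjugation of row and column unipotents -/

section Conjugation

open Matrix

variable {n : ℕ} {A : Type} [CommRing A] {k l p q : Fin n}

theorem conj_root_row (hpq : p ≠ q) (hpk : p ≠ k) (hqk : q ≠ k) (r : A) (z : Fin n → A) :
    MulAut.conj (root p q r) (row k z) = row k (z - Pi.single q (z p * r)) := by
  induction z using Pi.single_induction with
  | zero => simp
  | add u v hu hv =>
    rw [row_add, map_mul, hu, hv, ← row_add, Pi.add_apply, add_mul, Pi.single_add,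
      add_sub_add_comm]
  | single m t =>
    rw [row_single]
    rcases eq_or_ne m p with rfl | hm
    · rw [sub_eq_add_neg, add_comm, row_add, row_neg, row_single, row_single, Pi.single_eq_same,
        conj_eq_commutatorElement_mul, ← commutatorElement_inv,
        commutator_root hpk.symm hpq hqk.symm]
    · rw [conj_eq_self_iff_commute.2 (commute_root hqk hm.symm r t), Pi.single_eq_of_ne hm.symm,
        zero_mul, Pi.single_zero, sub_zero, row_single]

theorem conj_root_col (hpq : p ≠ q) (hpk : p ≠ k) (hqk : q ≠ k) (r : A) (z : Fin n → A) :
    MulAut.conj (root p q r) (col k z) = col k (z + Pi.single p (r * z q)) := by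
  have h := congrArg transposeInv (conj_root_row hpq.symm hqk hpk (-r) (-z))
  simpa [MulAut.conj_apply, transposeInv_row, transposeInv_root, ← root_neg, mul_comm r, add_comm]
    using h

theorem conj_col_row (hkl : k ≠ l) {w : Fin n → A} (hk : w k = 0) (hl : w l = 0) (z : Fin n → A) :
    MulAut.conj (col l w) (row k z) = row k (z - Pi.single l (z ⬝ᵥ w)) := by
  revert z
  refine pi_single_induction_of_eq_zero_on {k, l} (v := w) (P := fun w ↦ ∀ z : Fin n → A,
    MulAut.conj (col l w) (row k z) = row k (z - Pi.single l (z ⬝ᵥ w))) ?_ ?_ ?_ ?_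
  · simp [hk, hl]
  · simp
  · intro u v hu _ hu' hv' z
    rw [col_add, map_mul, MulAut.mul_apply, hv', hu', sub_dotProduct, single_dotProduct,
      hu l (by simp), dotProduct_add, mul_zero, sub_zero, add_comm (z ⬝ᵥ u), Pi.single_add,
      sub_sub]
  · intro m hm r z
    obtain ⟨hmk, hml⟩ : m ≠ k ∧ m ≠ l := by simpa using hm
    rw [col_single, conj_root_row hml hmk hkl.symm, dotProduct_single]

theorem conj_row_col (hkl : k ≠ l) {w : Fin n → A} (hk : w k = 0) (hl : w l = 0) (z : Fin n → A) :
    MulAut.conj (row l w) (col k z) = col k (z + Pi.single l (w ⬝ᵥ z)) := by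
  have h := congrArg transposeInv
    (conj_col_row hkl (w := -w) (by simp [hk]) (by simp [hl]) (-z))
  simpa [MulAut.conj_apply, transposeInv_row, transposeInv_col, ← row_neg, dotProduct_comm w,
    add_comm] using h

theorem conj_row_row (hkl : k ≠ l) {w : Fin n → A} (hk : w k = 0) (hl : w l = 0) (z : Fin n → A) :
    MulAut.conj (row l w) (row k z) = row k (z - z l • w) := by
  revert z
  refine pi_single_induction_of_eq_zero_on {k, l} (v := w) (P := fun w ↦ ∀ z : Fin n → A,
    MulAut.conj (row l w) (row k z) = row k (z - z l • w)) ?_ ?_ ?_ ?_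
  · simp [hk, hl]
  · simp
  · intro u v _ hv hu' hv' z
    rw [row_add, map_mul, MulAut.mul_apply, hv', hu', Pi.sub_apply, Pi.smul_apply,
      hv l (by simp), smul_zero, sub_zero, smul_add, sub_sub, add_comm (z l • v)]
  · intro m hm r z
    obtain ⟨hmk, hml⟩ : m ≠ k ∧ m ≠ l := by simpa using hm
    rw [row_single, conj_root_row hml.symm hkl.symm hmk, ← Pi.single_smul', smul_eq_mul]

theorem conj_col_col (hkl : k ≠ l) {w : Fin n → A} (hk : w k = 0) (hl : w l = 0) (z : Fin n → A) :
    MulAut.conj (col l w) (col k z) = col k (z + z l • w) := by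
  have h := congrArg transposeInv
    (conj_row_row hkl (w := -w) (by simp [hk]) (by simp [hl]) (-z))
  simpa [MulAut.conj_apply, transposeInv_row, ← col_neg, add_comm] using h

theorem commute_col_row (hkl : k ≠ l) {u v : Fin n → A} (hk : u k = 0) (hl : u l = 0)
    (h : u ⬝ᵥ v = 0) : Commute (col l u) (row k v) := by
  rw [← conj_eq_self_iff_commute, conj_col_row hkl hk hl, dotProduct_comm, h, Pi.single_zero,
    sub_zero]

theorem commute_row_row (hkl : k ≠ l) {u v : Fin n → A} (hk : u k = 0) (hl : u l = 0)
    (h : v l = 0) : Commute (row l u) (row k v) := by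
  rw [← conj_eq_self_iff_commute, conj_row_row hkl hk hl, h, zero_smul, sub_zero]

theorem commutator_root_row (hkl : k ≠ l) (t : A) {v : Fin n → A} (hk : v k = 0) (hl : v l = 0) :
    ⁅root l k t, row k v⁆ = row l (t • v) := by
  have h := conj_row_row hkl.symm hl hk (-Pi.single k t)
  rw [row_neg, row_single, MulAut.conj_apply] at h
  rw [commutatorElement_def, mul_assoc, mul_assoc, ← mul_assoc (row k v), h, ← row_single,
    ← row_add]
  simp

theorem commutator_col_root (hkl : k ≠ l) (t : A) {u : Fin n → A} (hk : u k = 0) (hl : u l = 0) :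
    ⁅col l u, root l k t⁆ = col k (t • u) := by
  rw [commutatorElement_def, ← MulAut.conj_apply, ← col_single, conj_col_col hkl hk hl, ← col_neg,
    ← col_add]
  simp

end Conjugation

/-! ### Transvections -/

section Transvection

open Matrix

variable {n : ℕ} {A : Type} [CommRing A] {k l p q : Fin n} {u v w : Fin n → A}

theorem commutatorElement_mul_left_of_commute {G : Type*} [Group G] {x y z : G}
    (h : Commute x ⁅y, z⁆) : ⁅x * y, z⁆ = ⁅y, z⁆ * ⁅x, z⁆ := by
  rw [commutatorElement_mul_left_eq_conj_mul, h.eq, mul_inv_cancel_right]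

theorem commutatorElement_mul_right_of_commute {G : Type*} [Group G] {x y z : G}
    (h : Commute y ⁅x, z⁆) : ⁅x, y * z⁆ = ⁅x, y⁆ * ⁅x, z⁆ := by
  rw [commutatorElement_mul_right_eq_mul_conj, mul_assoc _ y, h.eq, ← mul_assoc,
    mul_inv_cancel_right]

theorem commutatorElement_assoc_of_commute {G : Type*} [Group G] {x y z : G} (hxz : Commute x z)
    (hxy : Commute ⁅x, y⁆ ⁅y, z⁆) (hz : Commute ⁅y, z⁆ z) : ⁅⁅x, y⁆, z⁆ = ⁅x, ⁅y, z⁆⁆ := by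
  have hyz : Commute ⁅y, z⁆ ⁅⁅x, y⁆, z⁆ := by
    rw [← conj_eq_self_iff_commute, map_commutatorElement, conj_eq_self_iff_commute.2 hxy.symm,
      conj_eq_self_iff_commute.2 hz]
  have hconj : MulAut.conj x ⁅y, z⁆ = ⁅y, z⁆ * ⁅⁅x, y⁆, z⁆ := by
    rw [map_commutatorElement, conj_eq_self_iff_commute.2 hxz, conj_eq_commutatorElement_mul,
      commutatorElement_mul_left_of_commute hxy]
  rw [conj_eq_commutatorElement_mul, hyz.eq] at hconj
  exact (mul_right_cancel hconj).symm

theorem commutator_col_row_shift (hkl : k ≠ l) (t : A) (huk : u k = 0) (hul : u l = 0)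
    (hvk : v k = 0) (hvl : v l = 0) (h : u ⬝ᵥ v = 0) :
    ⁅col k (t • u), row k v⁆ = ⁅col l u, row l (t • v)⁆ := by
  have hcol := commutator_col_root hkl t huk hul
  have hrow := commutator_root_row hkl t hvk hvl
  rw [← hcol, ← hrow]
  refine commutatorElement_assoc_of_commute (commute_col_row hkl huk hul h) ?_ ?_
  · rw [hcol, hrow]
    exact commute_col_row hkl.symm (by simp [hul]) (by simp [huk]) (by simp [h])
  · rw [hrow]
    exact commute_row_row hkl (by simp [hvk]) (by simp [hvl]) hvl

theorem commutator_col_row_eq (hkl : k ≠ l) (huk : u k = 0) (hul : u l = 0)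
    (hvk : v k = 0) (hvl : v l = 0) (h : u ⬝ᵥ v = 0) :
    ⁅col k u, row k v⁆ = ⁅col l u, row l v⁆ := by
  simpa only [one_smul] using commutator_col_row_shift hkl 1 huk hul hvk hvl h

theorem conj_commutator_row (hkl : k ≠ l) (hwk : w k = 0) (hwl : w l = 0)
    (hvk : v k = 0) (hvl : v l = 0) (h : w ⬝ᵥ v = 0) (z : Fin n → A) :
    MulAut.conj ⁅col l w, row l v⁆ (row k z) = row k (z - (z ⬝ᵥ w) • v) := by
  have h' : v ⬝ᵥ w = 0 := by rw [dotProduct_comm, h]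
  simp only [commutatorElement_def, ← col_neg, ← row_neg, map_mul, MulAut.mul_apply]
  rw [conj_row_row hkl (by simp [hvk]) (by simp [hvl]),
    conj_col_row hkl (by simp [hwk]) (by simp [hwl]), conj_row_row hkl hvk hvl,
    conj_col_row hkl hwk hwl]
  congr 1
  simp only [smul_neg, sub_neg_eq_add, dotProduct_neg, add_dotProduct, sub_dotProduct,
    smul_dotProduct, single_dotProduct, h', smul_eq_mul, mul_zero, add_zero, sub_zero,
    Pi.single_neg, Pi.sub_apply, Pi.add_apply, Pi.smul_apply, Pi.neg_apply, Pi.single_eq_same,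
    hvl, hwl, add_smul]
  abel

theorem conj_commutator_col (hkl : k ≠ l) (hwk : w k = 0) (hwl : w l = 0)
    (hvk : v k = 0) (hvl : v l = 0) (h : w ⬝ᵥ v = 0) (z : Fin n → A) :
    MulAut.conj ⁅col l w, row l v⁆ (col k z) = col k (z + (v ⬝ᵥ z) • w) := by
  have h' : v ⬝ᵥ w = 0 := by rw [dotProduct_comm, h]
  simp only [commutatorElement_def, ← col_neg, ← row_neg, map_mul, MulAut.mul_apply]
  rw [conj_row_col hkl (by simp [hvk]) (by simp [hvl]),
    conj_col_col hkl (by simp [hwk]) (by simp [hwl]), conj_row_col hkl hvk hvl,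
    conj_col_col hkl hwk hwl]
  congr 1
  simp only [smul_neg, neg_smul, neg_neg, neg_zero, neg_add_rev, neg_add_cancel_right,
    neg_dotProduct, dotProduct_neg, dotProduct_add, dotProduct_smul, dotProduct_single, h',
    smul_eq_mul, mul_zero, zero_mul, add_zero, Pi.single_neg, Pi.add_apply, Pi.smul_apply,
    Pi.neg_apply, Pi.single_eq_same, hvl, hwl, add_smul]
  abel

/-- The vector `u` with its `k`-th coordinate replaced by `0`. -/
def zeroAt (k : Fin n) (u : Fin n → A) : Fin n → A :=
  Function.update u k 0

@[simp] theorem zeroAt_same (k : Fin n) (u : Fin n → A) : zeroAt k u k = 0 :=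
  Function.update_self k 0 u

theorem zeroAt_of_ne (h : l ≠ k) (u : Fin n → A) : zeroAt k u l = u l :=
  Function.update_of_ne h 0 u

@[simp] theorem zeroAt_zeroAt_apply_inner (k l : Fin n) (u : Fin n → A) :
    zeroAt k (zeroAt l u) l = 0 := by
  rcases eq_or_ne l k with rfl | h
  · simp
  · rw [zeroAt_of_ne h, zeroAt_same]

theorem zeroAt_comm (k l : Fin n) (u : Fin n → A) :
    zeroAt k (zeroAt l u) = zeroAt l (zeroAt k u) := by
  rcases eq_or_ne k l with rfl | h
  · rfl
  · exact Function.update_comm h.symm _ _ _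

theorem zeroAt_smul (k : Fin n) (t : A) (u : Fin n → A) : zeroAt k (t • u) = t • zeroAt k u := by
  simpa [zeroAt] using Function.update_smul t u k 0

theorem zeroAt_add_single (k : Fin n) (u : Fin n → A) : zeroAt k u + Pi.single k (u k) = u := by
  ext i
  rcases eq_or_ne i k with rfl | h
  · simp
  · simp [h, zeroAt_of_ne h]

theorem zeroAt_dotProduct (hk : v k = 0) (u : Fin n → A) : zeroAt k u ⬝ᵥ v = u ⬝ᵥ v := by
  conv_rhs => rw [← zeroAt_add_single k u]
  simp [hk]

theorem col_zeroAt (k : Fin n) (u : Fin n → A) : col k (zeroAt k u) = col k u :=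
  col_congr fun _ hi ↦ zeroAt_of_ne hi u

/-- For `vₖ = 0` and `u ⬝ᵥ v = 0` this is a lift of the transvection `1 + u vᵀ` to the Steinberg
group. -/
def transv (k : Fin n) (u v : Fin n → A) : SteinbergGroup n A :=
  ⁅col k u, row k v⁆ * row k (u k • v)

theorem transv_eq_commutator_mul (hkl : k ≠ l) (hvk : v k = 0) (hvl : v l = 0) (h : u ⬝ᵥ v = 0) :
    transv k u v =
      ⁅col k (zeroAt k (zeroAt l u)), row k v⁆ * (row k (u k • v) * row l (u l • v)) := by
  have h0 : zeroAt k (zeroAt l u) ⬝ᵥ v = 0 := by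
    rw [zeroAt_dotProduct hvk, zeroAt_dotProduct hvl, h]
  have hcomm : Commute (root l k (u l)) ⁅col k (zeroAt k (zeroAt l u)), row k v⁆ := by
    refine (conj_eq_self_iff_commute.1 ?_).symm
    rw [← row_single, conj_commutator_row hkl.symm (by simp) (by simp) hvl hvk h0]
    simp
  have hcol : col k u = root l k (u l) * col k (zeroAt k (zeroAt l u)) := by
    rw [col_zeroAt, ← col_single, ← col_add, add_comm, zeroAt_add_single]
  have hrow : Commute (row l (u l • v)) (row k (u k • v)) :=
    commute_row_row hkl (by simp [hvk]) (by simp [hvl]) (by simp [hvl])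
  rw [transv, hcol, commutatorElement_mul_left_of_commute hcomm,
    commutator_root_row hkl _ hvk hvl, mul_assoc, hrow.eq]

theorem transv_congr_index (hkl : k ≠ l) (hvk : v k = 0) (hvl : v l = 0) (h : u ⬝ᵥ v = 0) :
    transv k u v = transv l u v := by
  have h0 : zeroAt k (zeroAt l u) ⬝ᵥ v = 0 := by
    rw [zeroAt_dotProduct hvk, zeroAt_dotProduct hvl, h]
  have hcomm : Commute (row l (u l • v)) (row k (u k • v)) :=
    commute_row_row hkl (by simp [hvk]) (by simp [hvl]) (by simp [hvl])
  rw [transv_eq_commutator_mul hkl hvk hvl h, transv_eq_commutator_mul hkl.symm hvl hvk h,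
    zeroAt_comm l k, commutator_col_row_eq hkl (by simp) (by simp) hvk hvl h0, hcomm.eq]

theorem transv_smul_left (hkl : k ≠ l) (t : A) (hvk : v k = 0) (hvl : v l = 0) (h : u ⬝ᵥ v = 0) :
    transv k (t • u) v = transv k u (t • v) := by
  have h0 : zeroAt k (zeroAt l u) ⬝ᵥ v = 0 := by
    rw [zeroAt_dotProduct hvk, zeroAt_dotProduct hvl, h]
  rw [transv_eq_commutator_mul hkl hvk hvl (by simp [h]),
    transv_eq_commutator_mul hkl (by simp [hvk]) (by simp [hvl]) (by simp [h]),
    zeroAt_smul, zeroAt_smul, commutator_col_row_shift hkl _ (by simp) (by simp) hvk hvl h0,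
    commutator_col_row_eq hkl (by simp) (by simp) (by simp [hvk]) (by simp [hvl]) (by simp [h0])]
  simp only [Pi.smul_apply, smul_eq_mul, smul_smul, mul_comm]

theorem conj_root_transv (hpq : p ≠ q) (hpk : p ≠ k) (hqk : q ≠ k) (r : A) (u v : Fin n → A) :
    MulAut.conj (root p q r) (transv k u v) =
      transv k (u + Pi.single p (r * u q)) (v - Pi.single q (r * v p)) := by
  have hk : (u + Pi.single p (r * u q) : Fin n → A) k = u k := by simp [hpk.symm]
  rw [transv, transv, map_mul, map_commutatorElement, conj_root_col hpq hpk hqk,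
    conj_root_row hpq hpk hqk, conj_root_row hpq hpk hqk, hk, smul_sub, ← Pi.single_smul',
    Pi.smul_apply, smul_mul_assoc, mul_comm (v p)]

theorem conj_transv_row (hkl : k ≠ l) (hwk : w k = 0) (hvk : v k = 0) (hvl : v l = 0)
    (h : w ⬝ᵥ v = 0) (z : Fin n → A) :
    MulAut.conj (transv l w v) (row k z) = row k (z - (z ⬝ᵥ w) • v) := by
  have h0 : zeroAt l w ⬝ᵥ v = 0 := by rw [zeroAt_dotProduct hvl, h]
  have h1 : v ⬝ᵥ zeroAt l w = 0 := by rw [dotProduct_comm, h0]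
  have h2 : z ⬝ᵥ w = z ⬝ᵥ zeroAt l w + z l * w l := by
    conv_lhs => rw [← zeroAt_add_single l w]
    simp
  rw [transv, map_mul, MulAut.mul_apply, conj_row_row hkl (by simp [hvk]) (by simp [hvl]),
    ← col_zeroAt, conj_commutator_row hkl (by rw [zeroAt_of_ne hkl, hwk]) (by simp) hvk hvl h0, h2]
  congr 1
  simp only [sub_dotProduct, smul_dotProduct, h1, smul_zero, sub_zero]
  module

theorem transv_add_right (hkl : k ≠ l) {v' : Fin n → A} (hvk : v k = 0) (hvk' : v' k = 0)
    (hvl' : v' l = 0) (h : u ⬝ᵥ v = 0) (h' : u ⬝ᵥ v' = 0) :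
    transv k u (v + v') = transv k u v * transv k u v' := by
  have h0' : zeroAt k u ⬝ᵥ v' = 0 := by rw [zeroAt_dotProduct hvk', h']
  have htransv : ⁅col k u, row k v'⁆ = transv l (zeroAt k u) v' := by
    rw [← transv_congr_index hkl hvk' hvl' h0', transv, col_zeroAt, zeroAt_same, zero_smul,
      row_zero, mul_one]
  have hcomm (t : A) : Commute (row k (t • v)) ⁅col k u, row k v'⁆ := by
    refine (conj_eq_self_iff_commute.1 ?_).symm
    rw [htransv, conj_transv_row hkl (by simp) hvk' hvl' h0', dotProduct_comm, dotProduct_smul,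
      zeroAt_dotProduct hvk, h, smul_zero, zero_smul, sub_zero]
  have hadd : ⁅col k u, row k (v + v')⁆ = ⁅col k u, row k v⁆ * ⁅col k u, row k v'⁆ := by
    have h1 := hcomm 1
    rw [one_smul] at h1
    rw [row_add, commutatorElement_mul_right_of_commute h1]
  rw [transv, transv, transv, hadd, smul_add, row_add, mul_assoc, mul_assoc,
    ← mul_assoc _ (row k (u k • v)), ← (hcomm (u k)).eq, mul_assoc]

@[simp] theorem transv_zero_right (k : Fin n) (u : Fin n → A) : transv k u 0 = 1 := by
  simp [transv]

end Transvection

/-! ### Commutators supported on complementary pairs of coordinates -/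

section ComplementaryPairs

open Matrix

variable {n : ℕ} {A : Type} [CommRing A] {i j k l : Fin n} {x y f g : Fin n → A}

theorem commute_commutator_col (hkl : k ≠ l) (hxk : x k = 0) (hxl : x l = 0)
    (hyk : y k = 0) (hyl : y l = 0) (h : x ⬝ᵥ y = 0) {z : Fin n → A} (hz : z ⬝ᵥ y = 0) :
    Commute ⁅col l x, row l y⁆ (col k z) := by
  rw [← conj_eq_self_iff_commute, conj_commutator_col hkl hxk hxl hyk hyl h, dotProduct_comm, hz,
    zero_smul, add_zero]

theorem commute_commutator_row (hkl : k ≠ l) (hxk : x k = 0) (hxl : x l = 0)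
    (hyk : y k = 0) (hyl : y l = 0) (h : x ⬝ᵥ y = 0) {z : Fin n → A} (hz : x ⬝ᵥ z = 0) :
    Commute ⁅col l x, row l y⁆ (row k z) := by
  rw [← conj_eq_self_iff_commute, conj_commutator_row hkl hxk hxl hyk hyl h, dotProduct_comm, hz,
    zero_smul, sub_zero]

theorem commutator_col_smul_row_smul (hkl : k ≠ l) (hxk : x k = 0) (hxl : x l = 0)
    (hyk : y k = 0) (hyl : y l = 0) (h : x ⬝ᵥ y = 0) (a b : A) :
    ⁅col k (a • x), row k (b • y)⁆ = ⁅col k ((a * b) • x), row k y⁆ := by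
  rw [commutator_col_row_eq hkl (by simp [hxk]) (by simp [hxl]) (by simp [hyk]) (by simp [hyl])
      (by simp [h]), ← commutator_col_row_shift hkl b (by simp [hxk]) (by simp [hxl]) hyk hyl
      (by simp [h]), smul_smul, mul_comm]

theorem commutator_col_add_smul (hkl : k ≠ l) (hxk : x k = 0) (hxl : x l = 0)
    (hyk : y k = 0) (hyl : y l = 0) (h : x ⬝ᵥ y = 0) (a b : A) :
    ⁅col k ((a + b) • x), row k y⁆ = ⁅col k (b • x), row k y⁆ * ⁅col k (a • x), row k y⁆ := by
  have hcomm : Commute (col k (a • x)) ⁅col k (b • x), row k y⁆ := by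
    rw [commutator_col_row_shift hkl b hxk hxl hyk hyl h]
    exact (commute_commutator_col hkl hxk hxl (by simp [hyk]) (by simp [hyl]) (by simp [h])
      (by simp [h])).symm
  rw [add_smul, col_add, commutatorElement_mul_left_of_commute hcomm]

theorem commutator_col_mul_col_row_mul_row (hkl : k ≠ l) (hxk : x k = 0) (hxl : x l = 0)
    (hyk : y k = 0) (hyl : y l = 0) (h : x ⬝ᵥ y = 0) (a b c d : A) :
    ⁅col k (a • x) * col l (b • x), row k (c • y) * row l (d • y)⁆ =
      ⁅col k ((a * c + b * d) • x), row k y⁆ := by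
  have hlk : ⁅col l (b • x), row k (c • y)⁆ = 1 := commutatorElement_eq_one_iff_commute.2 <|
    commute_col_row hkl (by simp [hxk]) (by simp [hxl]) (by simp [h])
  have hkl' : ⁅col k (a • x), row l (d • y)⁆ = 1 := commutatorElement_eq_one_iff_commute.2 <|
    commute_col_row hkl.symm (by simp [hxl]) (by simp [hxk]) (by simp [h])
  have hcommRow : Commute (row k (c • y)) ⁅col l (b • x), row l (d • y)⁆ :=
    (commute_commutator_row hkl (by simp [hxk]) (by simp [hxl]) (by simp [hyk]) (by simp [hyl])
      (by simp [h]) (by simp [h])).symm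
  have hl : ⁅col l (b • x), row k (c • y) * row l (d • y)⁆ = ⁅col l (b • x), row l (d • y)⁆ := by
    rw [commutatorElement_mul_right_of_commute hcommRow, hlk, one_mul]
  have hcommCol : Commute (col k (a • x)) ⁅col l (b • x), row l (d • y)⁆ :=
    (commute_commutator_col hkl (by simp [hxk]) (by simp [hxl]) (by simp [hyk]) (by simp [hyl])
      (by simp [h]) (by simp [h])).symm
  rw [commutatorElement_mul_left_of_commute (by rwa [hl]), hl,
    commutatorElement_mul_right_of_commute (by rw [hkl']; exact Commute.one_right _), hkl', mul_one,
    commutator_col_smul_row_smul hkl hxk hxl hyk hyl h,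
    ← commutator_col_row_eq hkl (by simp [hxk]) (by simp [hxl]) (by simp [hyk]) (by simp [hyl])
      (by simp [h]), commutator_col_smul_row_smul hkl hxk hxl hyk hyl h,
    commutator_col_add_smul hkl hxk hxl hyk hyl h]

theorem eq_single_add_single (hij : i ≠ j) (hx : ∀ m, m ≠ i → m ≠ j → x m = 0) :
    x = Pi.single i (x i) + Pi.single j (x j) := by
  ext m
  rcases eq_or_ne m i with rfl | hi
  · simp [hij]
  rcases eq_or_ne m j with rfl | hj
  · simp [hi]
  · simp [hi, hj, hx m hi hj]

theorem dotProduct_eq_of_support (hij : i ≠ j) (hx : ∀ m, m ≠ i → m ≠ j → x m = 0)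
    (y : Fin n → A) : x ⬝ᵥ y = x i * y i + x j * y j := by
  rw [eq_single_add_single hij hx]
  simp [hij, hij.symm]

theorem row_mul_row_eq_col_mul_col (hij : i ≠ j) (hkl : k ≠ l) (hik : i ≠ k) (hjl : j ≠ l)
    (hx : ∀ m, m ≠ i → m ≠ j → x m = 0) (hf : ∀ m, m ≠ k → m ≠ l → f m = 0) :
    row i (x i • f) * row j (x j • f) = col k (f k • x) * col l (f l • x) := by
  have hrow (m : Fin n) (t : A) : row m (t • f) = root m k (t * f k) * root m l (t * f l) := by
    conv_lhs => rw [eq_single_add_single hkl hf]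
    rw [smul_add, row_add, ← Pi.single_smul', ← Pi.single_smul', row_single, row_single,
      smul_eq_mul, smul_eq_mul]
  have hcol (m : Fin n) (t : A) : col m (t • x) = root i m (t * x i) * root j m (t * x j) := by
    conv_lhs => rw [eq_single_add_single hij hx]
    rw [smul_add, col_add, ← Pi.single_smul', ← Pi.single_smul', col_single, col_single,
      smul_eq_mul, smul_eq_mul]
  have hcomm : Commute (root i l (x i * f l)) (root j k (x j * f k)) :=
    commute_root hjl.symm hik _ _
  simp only [hrow, hcol, mul_comm (f _)]
  rw [hcomm.mul_mul_mul_comm]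

theorem commute_commutator_row_mul_row (hij : i ≠ j) (hkl : k ≠ l) (hik : i ≠ k) (hil : i ≠ l)
    (hjk : j ≠ k) (hjl : j ≠ l) (hx : ∀ m, m ≠ i → m ≠ j → x m = 0)
    (hy : ∀ m, m ≠ i → m ≠ j → y m = 0) (hg : ∀ m, m ≠ k → m ≠ l → g m = 0) (h : x ⬝ᵥ y = 0) :
    Commute ⁅col k x, row k y⁆ (row i (x i • g) * row j (x j • g)) := by
  have hxk := hx k hik.symm hjk.symm
  have hxl := hx l hil.symm hjl.symm
  have hyk := hy k hik.symm hjk.symm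
  have hyl := hy l hil.symm hjl.symm
  rw [row_mul_row_eq_col_mul_col hij hkl hik hjl hx hg]
  refine Commute.mul_right ?_ (commute_commutator_col hkl.symm hxl hxk hyl hyk h (by simp [h]))
  rw [commutator_col_row_eq hkl hxk hxl hyk hyl h]
  exact commute_commutator_col hkl hxk hxl hyk hyl h (by simp [h])

theorem commute_row_mul_row_row_mul_row (hij : i ≠ j) (hkl : k ≠ l) (hik : i ≠ k) (hil : i ≠ l)
    (hjk : j ≠ k) (hjl : j ≠ l) (hx : ∀ m, m ≠ i → m ≠ j → x m = 0)
    (hy : ∀ m, m ≠ i → m ≠ j → y m = 0) (hg : ∀ m, m ≠ k → m ≠ l → g m = 0) (h : x ⬝ᵥ y = 0)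
    (hfg : g ⬝ᵥ f = 0) :
    Commute (row i (x i • g) * row j (x j • g)) (row k (f k • y) * row l (f l • y)) := by
  rw [row_mul_row_eq_col_mul_col hij hkl hik hjl hx hg, ← commutatorElement_eq_one_iff_commute,
    commutator_col_mul_col_row_mul_row hkl (hx k hik.symm hjk.symm) (hx l hil.symm hjl.symm)
      (hy k hik.symm hjk.symm) (hy l hil.symm hjl.symm) h, ← dotProduct_eq_of_support hkl hg, hfg,
    zero_smul, col_zero, commutatorElement_one_left]

theorem conj_commutator_col_mul_col (hij : i ≠ j) (hkl : k ≠ l) (hik : i ≠ k) (hil : i ≠ l)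
    (hjk : j ≠ k) (hjl : j ≠ l) (hx : ∀ m, m ≠ i → m ≠ j → x m = 0)
    (hf : ∀ m, m ≠ k → m ≠ l → f m = 0) (hg : ∀ m, m ≠ k → m ≠ l → g m = 0) (h : f ⬝ᵥ g = 0)
    {z z' : Fin n → A} (hz : ∀ m, m ≠ k → m ≠ l → z m = 0) (hz' : z' = z - (z ⬝ᵥ f) • g) :
    MulAut.conj ⁅col i f, row i g⁆ (col k (z k • x) * col l (z l • x)) =
      col k (z' k • x) * col l (z' l • x) := by
  have hsupp (m : Fin n) (hk : m ≠ k) (hl : m ≠ l) : z' m = 0 := by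
    simp [hz', hz m hk hl, hg m hk hl]
  have hfi := hf i hik hil
  have hfj := hf j hjk hjl
  have hgi := hg i hik hil
  have hgj := hg j hjk hjl
  rw [← row_mul_row_eq_col_mul_col hij hkl hik hjl hx hz,
    ← row_mul_row_eq_col_mul_col hij hkl hik hjl hx hsupp, map_mul,
    conj_commutator_row hij.symm hfj hfi hgj hgi h, commutator_col_row_eq hij hfi hfj hgi hgj h,
    conj_commutator_row hij hfi hfj hgi hgj h, hz']
  simp only [smul_dotProduct, smul_sub, smul_smul, smul_eq_mul]

theorem conj_commutator_row_mul_row (hij : i ≠ j) (hkl : k ≠ l) (hik : i ≠ k) (hil : i ≠ l)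
    (hjk : j ≠ k) (hjl : j ≠ l) (hy : ∀ m, m ≠ i → m ≠ j → y m = 0)
    (hf : ∀ m, m ≠ k → m ≠ l → f m = 0) (hg : ∀ m, m ≠ k → m ≠ l → g m = 0) (h : f ⬝ᵥ g = 0)
    {z z' : Fin n → A} (hz : ∀ m, m ≠ k → m ≠ l → z m = 0) (hz' : z' = z + (g ⬝ᵥ z) • f) :
    MulAut.conj ⁅col i f, row i g⁆ (row k (z k • y) * row l (z l • y)) =
      row k (z' k • y) * row l (z' l • y) := by
  have hsupp (m : Fin n) (hk : m ≠ k) (hl : m ≠ l) : z' m = 0 := by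
    simp [hz', hz m hk hl, hf m hk hl]
  have hfi := hf i hik hil
  have hfj := hf j hjk hjl
  have hgi := hg i hik hil
  have hgj := hg j hjk hjl
  rw [row_mul_row_eq_col_mul_col hkl hij hik.symm hjl.symm hz hy,
    row_mul_row_eq_col_mul_col hkl hij hik.symm hjl.symm hsupp hy, map_mul,
    conj_commutator_col hij.symm hfj hfi hgj hgi h, commutator_col_row_eq hij hfi hfj hgi hgj h,
    conj_commutator_col hij hfi hfj hgi hgj h, hz']
  simp only [dotProduct_smul, smul_add, smul_smul, smul_eq_mul]

-- The maps `z ↦ z - (z ⬝ᵥ f) • g` and `z ↦ z + (g ⬝ᵥ z) • f` are contragredient, so conjugation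
-- preserves the pairing of coefficients computed by `commutator_col_mul_col_row_mul_row`.
theorem commute_commutator_commutator (hij : i ≠ j) (hkl : k ≠ l) (hik : i ≠ k) (hil : i ≠ l)
    (hjk : j ≠ k) (hjl : j ≠ l) (hx : ∀ m, m ≠ i → m ≠ j → x m = 0)
    (hy : ∀ m, m ≠ i → m ≠ j → y m = 0) (hf : ∀ m, m ≠ k → m ≠ l → f m = 0)
    (hg : ∀ m, m ≠ k → m ≠ l → g m = 0) (hxy : x ⬝ᵥ y = 0) (hfg : f ⬝ᵥ g = 0) :
    Commute ⁅col i f, row i g⁆ ⁅col k x, row k y⁆ := by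
  have he (m : Fin n) (hk : m ≠ k) (_ : m ≠ l) : (Pi.single k 1 : Fin n → A) m = 0 :=
    Pi.single_eq_of_ne hk 1
  have hcol := conj_commutator_col_mul_col hij hkl hik hil hjk hjl hx hf hg hfg he rfl
  have hrow := conj_commutator_row_mul_row hij hkl hik hil hjk hjl hy hf hg hfg he rfl
  rw [Pi.single_eq_same, Pi.single_eq_of_ne hkl.symm, one_smul, zero_smul, col_zero,
    mul_one] at hcol
  rw [Pi.single_eq_same, Pi.single_eq_of_ne hkl.symm, one_smul, zero_smul, row_zero,
    mul_one] at hrow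
  have hfg' : f k * g k + f l * g l = 0 := by rw [← dotProduct_eq_of_support hkl hf, hfg]
  have hpair : (1 - f k * g k) * (1 + g k * f k) + (0 - f k * g l) * (0 + g k * f l) = 1 := by
    linear_combination -f k * g k * hfg'
  rw [← conj_eq_self_iff_commute, map_commutatorElement, hcol, hrow,
    commutator_col_mul_col_row_mul_row hkl (hx k hik.symm hjk.symm) (hx l hil.symm hjl.symm)
      (hy k hik.symm hjk.symm) (hy l hil.symm hjl.symm) hxy]
  simp only [single_dotProduct, dotProduct_single, Pi.sub_apply, Pi.add_apply, Pi.smul_apply,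
    Pi.single_eq_same, Pi.single_eq_of_ne hkl.symm, smul_eq_mul, one_mul, mul_one, hpair, one_smul]

end ComplementaryPairs

/-! ### Transvections parametrised by alternating forms -/

section SkewTransvection

open Matrix

variable {n : ℕ} {A : Type} [CommRing A]

theorem exists_ne_and_ne_and_ne [hn : Fact (4 ≤ n)] (i j m : Fin n) :
    ∃ k : Fin n, k ≠ i ∧ k ≠ j ∧ k ≠ m := by
  have hcard : ({i, j, m} : Finset (Fin n)).card < (Finset.univ : Finset (Fin n)).card := by
    rw [Finset.card_univ, Fintype.card_fin]
    exact Finset.card_le_three.trans_lt hn.out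
  obtain ⟨k, -, hk⟩ := Finset.exists_mem_notMem_of_card_lt_card hcard
  exact ⟨k, by simpa using hk⟩

/-- The vector `c (uⱼ eᵢ - uᵢ eⱼ)`, the image of `c (eᵢ ∧ eⱼ)` under contraction with `u`; these
are the Koszul syzygies of `u`, hence orthogonal to `u`. -/
def koszul (i j : Fin n) (u : Fin n → A) (c : A) : Fin n → A :=
  Pi.single i (c * u j) - Pi.single j (c * u i)

theorem dotProduct_koszul (i j : Fin n) (u : Fin n → A) (c : A) : u ⬝ᵥ koszul i j u c = 0 := by
  simp only [koszul, dotProduct_sub, dotProduct_single]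
  ring

theorem koszul_apply_of_ne {i j k : Fin n} (hi : k ≠ i) (hj : k ≠ j) (u : Fin n → A) (c : A) :
    koszul i j u c k = 0 := by
  simp [koszul, hi, hj]

theorem koszul_add (i j : Fin n) (u : Fin n → A) (c d : A) :
    koszul i j u (c + d) = koszul i j u c + koszul i j u d := by
  simp only [koszul, add_mul, Pi.single_add]
  abel

theorem koszul_self (i : Fin n) (u : Fin n → A) (c : A) : koszul i i u c = 0 :=
  sub_self _

theorem smul_koszul (i j : Fin n) (u : Fin n → A) (t c : A) :
    t • koszul i j u c = koszul i j u (t * c) := by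
  simp only [koszul, smul_sub, ← Pi.single_smul', smul_eq_mul, mul_assoc]

theorem koszul_smul (i j : Fin n) (u : Fin n → A) (t c : A) :
    koszul i j (t • u) c = koszul i j u (t * c) := by
  simp only [koszul, Pi.smul_apply, smul_eq_mul, mul_left_comm, mul_assoc]

theorem single_sub_transpose_mulVec (i j : Fin n) (u : Fin n → A) (c : A) :
    (single i j c - (single i j c)ᵀ) *ᵥ u = koszul i j u c := by
  rw [sub_mulVec, transpose_single, single_mulVec, single_mulVec, koszul]
  rfl

variable [Fact (4 ≤ n)]

/-- The transvection `1 + u vᵀ` along the Koszul syzygy `v = c (uⱼ eᵢ - uᵢ eⱼ)`, lifted to the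
Steinberg group by means of an arbitrary index different from `i` and `j`. -/
noncomputable def koszulTransv (i j : Fin n) (u : Fin n → A) (c : A) : SteinbergGroup n A :=
  transv (exists_ne_and_ne_and_ne i j i).choose u (koszul i j u c)

theorem koszulTransv_eq {i j k : Fin n} (hi : k ≠ i) (hj : k ≠ j) (u : Fin n → A) (c : A) :
    koszulTransv i j u c = transv k u (koszul i j u c) := by
  obtain ⟨h1, h2, _⟩ := (exists_ne_and_ne_and_ne i j i).choose_spec
  rw [koszulTransv]
  by_cases h : (exists_ne_and_ne_and_ne i j i).choose = k
  · rw [h]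
  · exact transv_congr_index h (koszul_apply_of_ne h1 h2 u c) (koszul_apply_of_ne hi hj u c)
      (dotProduct_koszul i j u c)

theorem transv_add_koszul {i j k : Fin n} (hi : k ≠ i) (hj : k ≠ j) {u v : Fin n → A}
    (hv : v k = 0) (h : u ⬝ᵥ v = 0) (c : A) :
    transv k u (v + koszul i j u c) = transv k u v * koszulTransv i j u c := by
  obtain ⟨l, hli, hlj, hlk⟩ := exists_ne_and_ne_and_ne i j k
  rw [koszulTransv_eq hi hj, transv_add_right hlk.symm hv (koszul_apply_of_ne hi hj u c)
    (koszul_apply_of_ne hli hlj u c) h (dotProduct_koszul i j u c)]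

theorem koszulTransv_add (i j : Fin n) (u : Fin n → A) (c d : A) :
    koszulTransv i j u (c + d) = koszulTransv i j u c * koszulTransv i j u d := by
  obtain ⟨k, hi, hj, _⟩ := exists_ne_and_ne_and_ne i j i
  rw [koszulTransv_eq hi hj, koszul_add, transv_add_koszul hi hj (koszul_apply_of_ne hi hj u c)
    (dotProduct_koszul i j u c), koszulTransv_eq hi hj u c]

@[simp] theorem koszulTransv_zero (i j : Fin n) (u : Fin n → A) : koszulTransv i j u 0 = 1 := by
  have h := koszulTransv_add i j u 0 0
  rwa [add_zero, left_eq_mul] at h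

@[simp] theorem koszulTransv_self (i : Fin n) (u : Fin n → A) (c : A) :
    koszulTransv i i u c = 1 := by
  rw [koszulTransv, koszul_self, transv_zero_right]

theorem koszulTransv_smul (i j : Fin n) (u : Fin n → A) (t c : A) :
    koszulTransv i j (t • u) c = koszulTransv i j u (t * (t * c)) := by
  obtain ⟨k, hki, hkj, _⟩ := exists_ne_and_ne_and_ne i j i
  obtain ⟨l, hli, hlj, hlk⟩ := exists_ne_and_ne_and_ne i j k
  rw [koszulTransv_eq hki hkj, koszulTransv_eq hki hkj, koszul_smul,
    transv_smul_left hlk.symm t (koszul_apply_of_ne hki hkj u _) (koszul_apply_of_ne hli hlj u _)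
      (dotProduct_koszul i j u _), smul_koszul]

theorem commute_koszulTransv_of_forall_eq {i j k l : Fin n} (hij : i ≠ j) (hkl : k ≠ l)
    (hik : i ≠ k) (hil : i ≠ l) (hjk : j ≠ k) (hjl : j ≠ l)
    (hall : ∀ m, m = i ∨ m = j ∨ m = k ∨ m = l) (u : Fin n → A) (c d : A) :
    Commute (koszulTransv i j u c) (koszulTransv k l u d) := by
  set v := koszul i j u c with hv
  set w := koszul k l u d with hw
  have huv : u ⬝ᵥ v = 0 := dotProduct_koszul i j u c
  have huw : u ⬝ᵥ w = 0 := dotProduct_koszul k l u d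
  have hvs (m : Fin n) (hi : m ≠ i) (hj : m ≠ j) : v m = 0 := koszul_apply_of_ne hi hj u c
  have hws (m : Fin n) (hk : m ≠ k) (hl : m ≠ l) : w m = 0 := koszul_apply_of_ne hk hl u d
  set x := zeroAt k (zeroAt l u) with hx
  set f := zeroAt i (zeroAt j u) with hf
  have hxs (m : Fin n) (hi : m ≠ i) (hj : m ≠ j) : x m = 0 := by
    rcases ((hall m).resolve_left hi).resolve_left hj with rfl | rfl <;> simp [x]
  have hfs (m : Fin n) (hk : m ≠ k) (hl : m ≠ l) : f m = 0 := by
    rcases hall m with rfl | rfl | rfl | rfl <;> simp_all [f]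
  have hxv : x ⬝ᵥ v = 0 := by
    rw [hx, zeroAt_dotProduct (hvs k hik.symm hjk.symm),
      zeroAt_dotProduct (hvs l hil.symm hjl.symm), huv]
  have hfw : f ⬝ᵥ w = 0 := by
    rw [hf, zeroAt_dotProduct (hws i hik hil), zeroAt_dotProduct (hws j hjk hjl), huw]
  have hui : u i = x i := by rw [hx, zeroAt_of_ne hik, zeroAt_of_ne hil]
  have huj : u j = x j := by rw [hx, zeroAt_of_ne hjk, zeroAt_of_ne hjl]
  have huk : u k = f k := by rw [hf, zeroAt_of_ne hik.symm, zeroAt_of_ne hjk.symm]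
  have hul : u l = f l := by rw [hf, zeroAt_of_ne hil.symm, zeroAt_of_ne hjl.symm]
  rw [koszulTransv_eq hik.symm hjk.symm, koszulTransv_eq hik hil, ← hv, ← hw,
    transv_eq_commutator_mul hkl (hvs k hik.symm hjk.symm) (hvs l hil.symm hjl.symm) huv,
    transv_eq_commutator_mul hij (hws i hik hil) (hws j hjk hjl) huw, ← hx, ← hf, hui, huj, huk,
    hul]
  refine Commute.mul_left (Commute.mul_right ?_ ?_) (Commute.mul_right ?_ ?_)
  · exact (commute_commutator_commutator hij hkl hik hil hjk hjl hxs hvs hfs hws hxv hfw).symm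
  · exact commute_commutator_row_mul_row hij hkl hik hil hjk hjl hxs hvs hws hxv
  · exact (commute_commutator_row_mul_row hkl hij hik.symm hjk.symm hil.symm hjl.symm hfs hws hvs
      hfw).symm
  · exact (commute_row_mul_row_row_mul_row hij hkl hik hil hjk hjl hxs hvs hws hxv
      (dotProduct_comm f w ▸ hfw)).symm

theorem commute_koszulTransv (i j k l : Fin n) (u : Fin n → A) (c d : A) :
    Commute (koszulTransv i j u c) (koszulTransv k l u d) := by
  rcases eq_or_ne i j with rfl | hij
  · simp
  rcases eq_or_ne k l with rfl | hkl
  · simp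
  by_cases hm : ∃ m, m ≠ i ∧ m ≠ j ∧ m ≠ k ∧ m ≠ l
  · obtain ⟨m, hi, hj, hk, hl⟩ := hm
    have hadd := transv_add_koszul hi hj (koszul_apply_of_ne hk hl u d)
      (dotProduct_koszul k l u d) c
    rw [add_comm, transv_add_koszul hk hl (koszul_apply_of_ne hi hj u c)
      (dotProduct_koszul i j u c), ← koszulTransv_eq hi hj, ← koszulTransv_eq hk hl] at hadd
    exact hadd
  · have hall (m : Fin n) : m = i ∨ m = j ∨ m = k ∨ m = l := by
      by_contra! h
      exact hm ⟨m, h⟩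
    have hcover (a b c : Fin n) : ∃ m, m ≠ a ∧ m ≠ b ∧ m ≠ c ∧ (m = i ∨ m = j ∨ m = k ∨ m = l) :=
      (exists_ne_and_ne_and_ne a b c).imp fun m h ↦ ⟨h.1, h.2.1, h.2.2, hall m⟩
    refine commute_koszulTransv_of_forall_eq hij hkl ?_ ?_ ?_ ?_ hall u c d
    · grind [hcover i j l]
    · grind [hcover i j k]
    · grind [hcover i j l]
    · grind [hcover i j k]

/-- `c ↦ koszulTransv i j u c` as a homomorphism, with the indices paired up. -/
noncomputable def koszulTransvHom (u : Fin n → A) (p : Fin n × Fin n) :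
    Multiplicative A →* SteinbergGroup n A where
  toFun r := koszulTransv p.1 p.2 u r.toAdd
  map_one' := koszulTransv_zero p.1 p.2 u
  map_mul' r s := koszulTransv_add p.1 p.2 u r.toAdd s.toAdd

theorem pairwise_commute_koszulTransvHom (u : Fin n → A) :
    Pairwise fun p q ↦ ∀ x y : Multiplicative A,
      Commute (koszulTransvHom u p x) (koszulTransvHom u q y) :=
  fun _ _ _ _ _ ↦ commute_koszulTransv _ _ _ _ u _ _

/-- A lift to the Steinberg group of the transvection `1 + u ((w - wᵀ) u)ᵀ`; it only depends on the
alternating form `w - wᵀ`. -/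
noncomputable def skewTransv (u : Fin n → A) (w : Matrix (Fin n) (Fin n) A) : SteinbergGroup n A :=
  MonoidHom.noncommPiCoprod _ (pairwise_commute_koszulTransvHom u)
    fun p ↦ Multiplicative.ofAdd (w p.1 p.2)

theorem skewTransv_add (u : Fin n → A) (w w' : Matrix (Fin n) (Fin n) A) :
    skewTransv u (w + w') = skewTransv u w * skewTransv u w' :=
  map_mul (MonoidHom.noncommPiCoprod _ (pairwise_commute_koszulTransvHom u)) _ _

@[simp] theorem skewTransv_zero (u : Fin n → A) : skewTransv u 0 = 1 :=
  map_one (MonoidHom.noncommPiCoprod _ (pairwise_commute_koszulTransvHom u))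

theorem skewTransv_neg (u : Fin n → A) (w : Matrix (Fin n) (Fin n) A) :
    skewTransv u (-w) = (skewTransv u w)⁻¹ :=
  eq_inv_of_mul_eq_one_left <| by rw [← skewTransv_add, neg_add_cancel, skewTransv_zero]

theorem skewTransv_single (u : Fin n → A) (i j : Fin n) (c : A) :
    skewTransv u (single i j c) = koszulTransv i j u c := by
  have hsingle : (fun p : Fin n × Fin n ↦ Multiplicative.ofAdd (single i j c p.1 p.2)) =
      Pi.mulSingle (i, j) (Multiplicative.ofAdd c) := by
    ext p
    rcases eq_or_ne p (i, j) with rfl | h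
    · simp
    · have hp : ¬(i = p.1 ∧ j = p.2) := fun hp ↦ h (Prod.ext hp.1 hp.2).symm
      rw [Pi.mulSingle_eq_of_ne h, single_apply_of_ne _ _ _ _ _ hp, ofAdd_zero]
  rw [skewTransv, hsingle, MonoidHom.noncommPiCoprod_mulSingle]
  rfl

attribute [irreducible] skewTransv

end SkewTransvection

section SkewTransvectionConj

open Matrix

variable {n : ℕ} {A : Type} [CommRing A]

theorem transvection_mulVec (p q : Fin n) (r : A) (u : Fin n → A) :
    transvection p q r *ᵥ u = u + Pi.single p (r * u q) := by
  rw [transvection, add_mulVec, one_mulVec, single_mulVec]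
  rfl

theorem transpose_transvection (p q : Fin n) (r : A) :
    (transvection p q r)ᵀ = transvection q p r := by
  simp [transvection]

theorem conj_root_transv_self {p q : Fin n} (hpq : p ≠ q) (r : A) {u v : Fin n → A}
    (hvp : v p = 0) (hvq : v q = 0) (h : u ⬝ᵥ v = 0) :
    MulAut.conj (root p q r) (transv p u v) = transv p (u + Pi.single p (r * u q)) v := by
  have h0 : zeroAt p (zeroAt q u) ⬝ᵥ v = 0 := by
    rw [zeroAt_dotProduct hvp, zeroAt_dotProduct hvq, h]
  have hzero : zeroAt p (zeroAt q (u + Pi.single p (r * u q))) = zeroAt p (zeroAt q u) := by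
    rw [zeroAt_comm, zeroAt_comm p, zeroAt, zeroAt, zeroAt, zeroAt]
    congr 1
    ext i
    rcases eq_or_ne i p with rfl | hi
    · simp
    · simp [hi]
  have hcommutator : MulAut.conj (root p q r) ⁅col p (zeroAt p (zeroAt q u)), row p v⁆ =
      ⁅col p (zeroAt p (zeroAt q u)), row p v⁆ := by
    refine conj_eq_self_iff_commute.2 (conj_eq_self_iff_commute.1 ?_).symm
    rw [← row_single, commutator_col_row_eq hpq (by simp) (by simp) hvp hvq h0,
      conj_commutator_row hpq (by simp) (by simp) hvp hvq h0]
    simp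
  have hrowp : MulAut.conj (root p q r) (row p (u p • v)) = row p (u p • v) := by
    rw [conj_eq_self_iff_commute, ← row_single, commute_iff_eq, ← row_add, add_comm, row_add]
  have hrowq : MulAut.conj (root p q r) (row q (u q • v)) =
      row p (r • u q • v) * row q (u q • v) := by
    rw [conj_eq_commutatorElement_mul,
      commutator_root_row hpq.symm r (by simp [hvq]) (by simp [hvp])]
  have hdot : (u + Pi.single p (r * u q)) ⬝ᵥ v = 0 := by simp [h, hvp]
  have hadd : u p • v + r • u q • v = (u + Pi.single p (r * u q) : Fin n → A) p • v := by
    simp only [Pi.add_apply, Pi.single_eq_same]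
    module
  rw [transv_eq_commutator_mul hpq hvp hvq h, transv_eq_commutator_mul hpq hvp hvq hdot, map_mul,
    map_mul, hcommutator, hrowp, hrowq, hzero, ← mul_assoc (row p _) (row p _), ← row_add, hadd]
  simp [hpq.symm]

variable [Fact (4 ≤ n)]

theorem skewTransv_eq_transv {k : Fin n} {w : Matrix (Fin n) (Fin n) A} (hrow : ∀ i, w k i = 0)
    (hcol : ∀ i, w i k = 0) (u : Fin n → A) :
    skewTransv u w = transv k u ((w - wᵀ) *ᵥ u) := by
  have hsum (s : Finset (Fin n × Fin n)) :
      skewTransv u (∑ p ∈ s, single p.1 p.2 (w p.1 p.2)) =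
        transv k u (∑ p ∈ s, koszul p.1 p.2 u (w p.1 p.2)) := by
    have hzero {p : Fin n × Fin n} (hp : k = p.1 ∨ k = p.2) : w p.1 p.2 = 0 := by
      rcases hp with rfl | rfl
      exacts [hrow _, hcol _]
    have hk (p : Fin n × Fin n) : koszul p.1 p.2 u (w p.1 p.2) k = 0 := by
      by_cases hp : k = p.1 ∨ k = p.2
      · simp [koszul, hzero hp]
      · rw [not_or] at hp
        exact koszul_apply_of_ne hp.1 hp.2 u _
    induction s using Finset.induction_on with
    | empty => simp
    | insert p s hps ih =>
      rw [Finset.sum_insert hps, Finset.sum_insert hps, add_comm, skewTransv_add, ih,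
        skewTransv_single]
      by_cases hp : k = p.1 ∨ k = p.2
      · simp [koszul, hzero hp]
      · rw [not_or] at hp
        rw [add_comm (koszul _ _ _ _), transv_add_koszul hp.1 hp.2]
        · simp [hk]
        · simp [dotProduct_sum, dotProduct_koszul]
  have hw : w = ∑ p : Fin n × Fin n, single p.1 p.2 (w p.1 p.2) := by
    rw [Fintype.sum_prod_type]
    exact matrix_eq_sum_single w
  have hkoszul : (w - wᵀ) *ᵥ u = ∑ p : Fin n × Fin n, koszul p.1 p.2 u (w p.1 p.2) := by
    conv_lhs => rw [hw]
    simp only [transpose_sum, ← Finset.sum_sub_distrib, sum_mulVec, single_sub_transpose_mulVec]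
  rw [hkoszul, ← hsum, ← hw]

theorem skewTransv_smul (t : A) (u : Fin n → A) (w : Matrix (Fin n) (Fin n) A) :
    skewTransv (t • u) w = skewTransv u ((t * t) • w) := by
  induction w using Matrix.induction_on' with
  | h_zero => simp
  | h_add w w' hw hw' => rw [skewTransv_add, hw, hw', smul_add, skewTransv_add]
  | h_std_basis i j c =>
    rw [skewTransv_single, smul_single, skewTransv_single, koszulTransv_smul, smul_eq_mul,
      mul_assoc]

theorem conj_root_skewTransv_of_eq_zero {p q k : Fin n} (hpq : p ≠ q) (hpk : p ≠ k) (hqk : q ≠ k)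
    (r : A) (u : Fin n → A) {w : Matrix (Fin n) (Fin n) A} (hrow : ∀ i, w k i = 0)
    (hcol : ∀ i, w i k = 0) :
    MulAut.conj (root p q r) (skewTransv u w) = skewTransv (transvection p q r *ᵥ u)
      (transvection q p (-r) * w * transvection p q (-r)) := by
  have hcancel : transvection p q (-r) * transvection p q r = 1 := by
    rw [transvection_mul_transvection_same _ _ hpq, neg_add_cancel, transvection_zero]
  have hskew : transvection q p (-r) * w * transvection p q (-r) -
      (transvection q p (-r) * w * transvection p q (-r))ᵀ =
        transvection q p (-r) * (w - wᵀ) * transvection p q (-r) := by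
    simp only [transpose_mul, transpose_transvection, mul_sub, sub_mul, Matrix.mul_assoc]
  rw [skewTransv_eq_transv hrow hcol, conj_root_transv hpq hpk hqk, skewTransv_eq_transv (k := k),
    hskew, mulVec_mulVec, Matrix.mul_assoc, hcancel, Matrix.mul_one, ← mulVec_mulVec,
    transvection_mulVec, transvection_mulVec, neg_mul, Pi.single_neg, sub_eq_add_neg]
  · intro i
    rw [Matrix.mul_assoc, transvection_mul_apply_of_ne _ _ _ _ hqk.symm]
    simp [mul_apply, hrow]
  · intro i
    rw [mul_transvection_apply_of_ne _ _ _ _ hqk.symm]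
    simp [mul_apply, hcol]

theorem conj_root_skewTransv {p q : Fin n} (hpq : p ≠ q) (r : A) (u : Fin n → A)
    (w : Matrix (Fin n) (Fin n) A) :
    MulAut.conj (root p q r) (skewTransv u w) = skewTransv (transvection p q r *ᵥ u)
      (transvection q p (-r) * w * transvection p q (-r)) := by
  induction w using Matrix.induction_on' with
  | h_zero => simp
  | h_add w w' hw hw' => rw [skewTransv_add, map_mul, hw, hw', mul_add, add_mul, skewTransv_add]
  | h_std_basis i j c =>
    by_cases hk : ∃ k, k ≠ i ∧ k ≠ j ∧ k ≠ p ∧ k ≠ q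
    · obtain ⟨k, hi, hj, hp, hq⟩ := hk
      exact conj_root_skewTransv_of_eq_zero hpq hp.symm hq.symm r u
        (fun m ↦ by simp [hi.symm]) (fun m ↦ by simp [hj.symm])
    · obtain ⟨hpi, hpj, hqi, hqj⟩ : p ≠ i ∧ p ≠ j ∧ q ≠ i ∧ q ≠ j := by
        obtain ⟨k, hki, hkj, hkp⟩ := exists_ne_and_ne_and_ne i j p
        obtain ⟨l, hli, hlj, hlq⟩ := exists_ne_and_ne_and_ne i j q
        push Not at hk
        have hkq : k = q := hk k hki hkj hkp
        have hlp : l = p := of_not_not fun h ↦ hlq (hk l hli hlj h)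
        subst hkq hlp
        exact ⟨hli, hlj, hki, hkj⟩
      have hform : transvection q p (-r) * single i j c * transvection p q (-r) =
          single i j c := by
        simp [transvection, mul_add, add_mul, hpi, hpj.symm]
      have hkoszul : koszul i j (u + Pi.single p (r * u q)) c = koszul i j u c := by
        simp [koszul, hpi.symm, hpj.symm]
      rw [hform, skewTransv_single, skewTransv_single, koszulTransv_eq hpi hpj,
        koszulTransv_eq hpi hpj, transvection_mulVec, hkoszul]
      exact conj_root_transv_self hpq r (koszul_apply_of_ne hpi hpj u c)
        (koszul_apply_of_ne hqi hqj u c) (dotProduct_koszul i j u c)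

theorem skewTransv_koszul_single (u : Fin n → A) (a b c : Fin n) (d : A) :
    skewTransv u (single a b (d * u c) + single b c (d * u a) + single c a (d * u b)) = 1 := by
  obtain ⟨k, ha, hb, hc⟩ := exists_ne_and_ne_and_ne a b c
  rw [skewTransv_eq_transv (k := k)]
  · have hsub (x y z : Matrix (Fin n) (Fin n) A) :
        x + y + z - (x + y + z)ᵀ = (x - xᵀ) + (y - yᵀ) + (z - zᵀ) := by
      simp only [transpose_add]
      abel
    have hkoszul :
        koszul a b u (d * u c) + koszul b c u (d * u a) + koszul c a u (d * u b) = 0 := by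
      simp only [koszul, mul_assoc, mul_comm (u b) (u c), mul_comm (u a) (u c),
        mul_comm (u b) (u a)]
      abel
    simp only [hsub, add_mulVec, single_sub_transpose_mulVec, hkoszul, transv_zero_right]
  · simp [ha.symm, hb.symm, hc.symm]
  · simp [ha.symm, hb.symm, hc.symm]

/-- `skewTransv u` vanishes on the image of the Koszul differential `Λ³ → Λ²` of `u`. -/
theorem skewTransv_koszul (u : Fin n → A) (τ : Fin n → Fin n → Fin n → A) :
    skewTransv u (fun i j ↦ ∑ k, u k * (τ i j k + τ k i j + τ j k i)) = 1 := by
  have hsum : (fun i j ↦ ∑ k, u k * (τ i j k + τ k i j + τ j k i) : Matrix (Fin n) (Fin n) A) =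
      ∑ a, ∑ b, ∑ c, (single a b (τ a b c * u c) + single b c (τ a b c * u a) +
        single c a (τ a b c * u b)) := by
    ext i j
    simp [Matrix.sum_apply, single_apply, Finset.sum_add_distrib, mul_add, ite_and, mul_comm]
  have hmul (w w' : Matrix (Fin n) (Fin n) A) (hw : skewTransv u w = 1)
      (hw' : skewTransv u w' = 1) : skewTransv u (w + w') = 1 := by
    rw [skewTransv_add, hw, hw', one_mul]
  have hzero := skewTransv_zero u
  rw [hsum]
  exact Finset.sum_induction _ (skewTransv u · = 1) hmul hzero fun a _ ↦
    Finset.sum_induction _ (skewTransv u · = 1) hmul hzero fun b _ ↦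
      Finset.sum_induction _ (skewTransv u · = 1) hmul hzero fun c _ ↦
        skewTransv_koszul_single u a b c (τ a b c)

theorem skewTransv_single_one {i j : Fin n} (hij : i ≠ j) (s : A) :
    skewTransv (Pi.single i 1) (single j i s) = root i j s := by
  obtain ⟨k, hki, hkj, -⟩ := exists_ne_and_ne_and_ne i j i
  have hkoszul : koszul j i (Pi.single i 1) s = Pi.single j s := by simp [koszul, hij.symm]
  rw [skewTransv_single, koszulTransv_eq hkj hki, hkoszul, transv, col_single, row_single,
    commutator_root hki.symm hkj hij, Pi.single_eq_of_ne hki, zero_smul, row_zero, one_mul, mul_one]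

end SkewTransvectionConj

/-! ### Functoriality and the projection to the general linear group -/

section ToGL

open Matrix MatrixGroups

variable {n : ℕ} {A B : Type} [CommRing A] [CommRing B]

theorem commutatorElement_eq_iff {G : Type*} [Group G] {a b c : G} :
    ⁅a, b⁆ = c ↔ a * b = c * b * a := by
  rw [commutatorElement_def, mul_inv_eq_iff_eq_mul, mul_inv_eq_iff_eq_mul]

/-- The elementary matrix `1 + r Eᵢⱼ` as an invertible matrix, with the junk value `1` for
`i = j`. -/
def transvectionGL (i j : Fin n) (r : A) : GL (Fin n) A :=
  if h : i ≠ j then SpecialLinearGroup.transvection h r else 1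

theorem coe_transvectionGL {i j : Fin n} (h : i ≠ j) (r : A) :
    (transvectionGL i j r : Matrix (Fin n) (Fin n) A) = transvection i j r := by
  rw [transvectionGL, dif_pos h]
  rfl

/-- The canonical homomorphism `St(n, A) → GL(n, A)` sending `x_{ij}(r)` to `1 + r Eᵢⱼ`. -/
def toGL : SteinbergGroup n A →* GL (Fin n) A :=
  lift transvectionGL
    (fun i j h r s ↦ Units.ext <| by
      rw [Units.val_mul, coe_transvectionGL h, coe_transvectionGL h, coe_transvectionGL h,
        transvection_mul_transvection_same _ _ h])
    (fun i j h k hij hhk hjh hik r s ↦ (commute_iff_eq _ _).2 <| Units.ext <| by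
      simp only [Units.val_mul, coe_transvectionGL hij, coe_transvectionGL hhk, transvection,
        mul_add, add_mul, mul_one, one_mul, single_mul_single_of_ne _ _ _ _ hjh,
        single_mul_single_of_ne _ _ _ _ hik.symm]
      abel)
    (fun i j k hij hjk hik r s ↦ commutatorElement_eq_iff.2 <| Units.ext <| by
      simp only [Units.val_mul, coe_transvectionGL hij, coe_transvectionGL hjk,
        coe_transvectionGL hik, transvection, mul_add, add_mul, mul_one, one_mul,
        single_mul_single_same, single_mul_single_of_ne _ _ _ _ hjk.symm,
        single_mul_single_of_ne _ _ _ _ hik.symm, add_zero]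
      abel)

theorem toGL_root (i j : Fin n) (r : A) : toGL (root i j r) = transvectionGL i j r := by
  by_cases h : i = j
  · rw [h, root_self, map_one, transvectionGL, dif_neg (not_not_intro rfl)]
  · rw [toGL, lift_root _ _ _ _ h]

theorem coe_toGL_root {i j : Fin n} (h : i ≠ j) (r : A) :
    (toGL (root i j r) : Matrix (Fin n) (Fin n) A) = transvection i j r := by
  rw [toGL_root, coe_transvectionGL h]

theorem coe_toGL_root_inv {i j : Fin n} (h : i ≠ j) (r : A) :
    (toGL (root i j r))⁻¹.val = transvection i j (-r) := by
  rw [← map_inv, ← root_neg, coe_toGL_root h]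

theorem vecMulVec_single_single (i j : Fin n) (r s : A) :
    vecMulVec (Pi.single i r) (Pi.single j s) = single i j (r * s) := by
  ext a b
  simp only [vecMulVec_apply, Pi.single_apply, single_apply, ite_and, mul_ite, ite_mul, zero_mul,
    mul_zero, eq_comm]
  split_ifs <;> rfl

theorem toGL_col {k : Fin n} {u : Fin n → A} (hu : u k = 0) :
    (toGL (col k u) : Matrix (Fin n) (Fin n) A) = 1 + vecMulVec u (Pi.single k 1) := by
  refine pi_single_induction_of_eq_zero_on {k} (v := u) (P := fun u ↦
    (toGL (col k u) : Matrix (Fin n) (Fin n) A) = 1 + vecMulVec u (Pi.single k 1)) ?_ ?_ ?_ ?_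
  · simpa using hu
  · simp
  · intro u v _ hvk hu hv
    rw [col_add, map_mul, Units.val_mul, hu, hv, add_vecMulVec]
    simp only [mul_add, mul_one, add_mul, one_mul, vecMulVec_mul_vecMulVec, single_one_dotProduct,
      hvk k rfl, zero_smul, vecMulVec_zero, add_zero]
    abel
  · intro m hm r
    rw [col_single, coe_toGL_root hm, transvection, vecMulVec_single_single, mul_one]

theorem toGL_row {k : Fin n} {v : Fin n → A} (hv : v k = 0) :
    (toGL (row k v) : Matrix (Fin n) (Fin n) A) = 1 + vecMulVec (Pi.single k 1) v := by
  refine pi_single_induction_of_eq_zero_on {k} (v := v) (P := fun v ↦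
    (toGL (row k v) : Matrix (Fin n) (Fin n) A) = 1 + vecMulVec (Pi.single k 1) v) ?_ ?_ ?_ ?_
  · simpa using hv
  · simp
  · intro u v huk _ hu hv
    rw [row_add, map_mul, Units.val_mul, hu, hv, vecMulVec_add]
    simp only [mul_add, mul_one, add_mul, one_mul, vecMulVec_mul_vecMulVec,
      dotProduct_single_one, huk k rfl, zero_smul, vecMulVec_zero, add_zero]
    abel
  · intro m hm r
    rw [row_single, coe_toGL_root (Ne.symm hm), transvection, vecMulVec_single_single, one_mul]

theorem toGL_transv {k : Fin n} {u v : Fin n → A} (hv : v k = 0) (h : u ⬝ᵥ v = 0) :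
    (toGL (transv k u v) : Matrix (Fin n) (Fin n) A) = 1 + vecMulVec u v := by
  have h0 : v ⬝ᵥ zeroAt k u = 0 := by rw [dotProduct_comm, zeroAt_dotProduct hv, h]
  have hcommutator : (toGL ⁅col k u, row k v⁆ : Matrix (Fin n) (Fin n) A) =
      1 + vecMulVec (zeroAt k u) v := by
    have hunit : ∃ c : GL (Fin n) A, c.val = 1 + vecMulVec (zeroAt k u) v := by
      refine ⟨⟨1 + vecMulVec (zeroAt k u) v, 1 - vecMulVec (zeroAt k u) v, ?_, ?_⟩, rfl⟩
      · simp [mul_sub, add_mul, vecMulVec_mul_vecMulVec, h0]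
      · simp [mul_add, sub_mul, vecMulVec_mul_vecMulVec, h0]
    obtain ⟨c, hc⟩ := hunit
    rw [← hc, Units.val_inj, map_commutatorElement, commutatorElement_eq_iff, ← col_zeroAt]
    refine Units.ext ?_
    rw [Units.val_mul, Units.val_mul, Units.val_mul, toGL_col (by simp), toGL_row hv, hc]
    simp only [mul_add, mul_one, add_mul, one_mul, vecMulVec_mul_vecMulVec, dotProduct_single,
      Pi.single_eq_same, one_smul, hv, zero_smul, vecMulVec_zero, add_zero, h0]
    abel
  have hu : vecMulVec u v = vecMulVec (zeroAt k u) v + vecMulVec (Pi.single k (u k)) v := by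
    rw [← add_vecMulVec, zeroAt_add_single]
  rw [transv, map_mul, Units.val_mul, hcommutator, toGL_row (by simp [hv]), hu]
  simp [mul_add, add_mul, vecMulVec_mul_vecMulVec, hv, vecMulVec_smul, ← smul_vecMulVec,
    ← Pi.single_smul', add_assoc]

/-- The homomorphism `St(n, A) → St(n, B)` induced by a ring homomorphism `A → B`. -/
def map (φ : A →+* B) : SteinbergGroup n A →* SteinbergGroup n B :=
  lift (fun i j r ↦ root i j (φ r)) (fun i j _ r s ↦ by rw [map_add, root_add])
    (fun i j h k _ _ hjh hik r s ↦ commute_root hjh hik _ _)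
    (fun i j k hij hjk hik r s ↦ by rw [commutator_root hij hjk hik, map_mul])

@[simp] theorem map_root (φ : A →+* B) (i j : Fin n) (r : A) :
    map φ (root i j r) = root i j (φ r) := by
  rcases eq_or_ne i j with rfl | h
  · simp
  · exact lift_root _ _ _ _ h r

theorem map_map {D : Type} [CommRing D] (ψ : B →+* D) (φ : A →+* B) (z : SteinbergGroup n A) :
    map ψ (map φ z) = map (ψ.comp φ) z :=
  DFunLike.congr_fun (f := (map ψ).comp (map φ)) (hom_ext fun i j _ r ↦ by simp) z

theorem eq_map {φ : A →+* B} {f : SteinbergGroup n A →* SteinbergGroup n B}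
    (hf : ∀ i j hij r, f (stx n A i j hij r) = stx n B i j hij (φ r)) : f = map φ :=
  hom_ext fun i j hij r ↦ by rw [map_root, root_of_ne hij, hf, root_of_ne hij]

theorem toGL_map (φ : A →+* B) (z : SteinbergGroup n A) :
    toGL (map φ z) = GeneralLinearGroup.map φ (toGL z) := by
  refine DFunLike.congr_fun (f := toGL.comp (map φ))
    (g := (GeneralLinearGroup.map φ).comp toGL) (hom_ext fun i j h r ↦ Units.ext ?_) z
  change (toGL (map φ (root i j r))).val = (toGL (root i j r)).val.map φ
  rw [map_root, coe_toGL_root h, coe_toGL_root h]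
  ext a b
  simp [transvection, one_apply, single_apply, apply_ite φ]

theorem comp_add (φ : A →+* B) (u v : Fin n → A) : φ ∘ (u + v) = φ ∘ u + φ ∘ v :=
  funext fun _ ↦ map_add φ _ _

theorem comp_single (φ : A →+* B) (m : Fin n) (r : A) :
    φ ∘ (Pi.single m r : Fin n → A) = Pi.single m (φ r) :=
  funext fun i ↦ Pi.apply_single (fun _ ↦ φ) (fun _ ↦ map_zero φ) m r i

theorem map_col (φ : A →+* B) (k : Fin n) (u : Fin n → A) : map φ (col k u) = col k (φ ∘ u) := by
  induction u using Pi.single_induction with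
  | zero => simp
  | add u v hu hv => rw [col_add, map_mul, hu, hv, comp_add, col_add]
  | single m r => rw [col_single, map_root, comp_single, col_single]

theorem map_row (φ : A →+* B) (k : Fin n) (v : Fin n → A) : map φ (row k v) = row k (φ ∘ v) := by
  induction v using Pi.single_induction with
  | zero => simp
  | add u v hu hv => rw [row_add, map_mul, hu, hv, comp_add, row_add]
  | single m r => rw [row_single, map_root, comp_single, row_single]

theorem map_transv (φ : A →+* B) (k : Fin n) (u v : Fin n → A) :
    map φ (transv k u v) = transv k (φ ∘ u) (φ ∘ v) := by
  have hsmul : φ ∘ (u k • v) = (φ ∘ u) k • (φ ∘ v) := funext fun _ ↦ map_mul φ _ _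
  rw [transv, map_mul, map_commutatorElement, map_col, map_row, map_row, hsmul, transv]

theorem dotProduct_sub_transpose_mulVec (w : Matrix (Fin n) (Fin n) A) (u : Fin n → A) :
    ((w - wᵀ) *ᵥ u) ⬝ᵥ u = 0 := by
  rw [sub_mulVec, sub_dotProduct, mulVec_transpose, ← dotProduct_mulVec, dotProduct_comm, sub_self]

variable [Fact (4 ≤ n)]

theorem conj_skewTransv (z : SteinbergGroup n A) (u : Fin n → A) (w : Matrix (Fin n) (Fin n) A) :
    MulAut.conj z (skewTransv u w) =
      skewTransv ((toGL z).val *ᵥ u) ((toGL z)⁻¹.valᵀ * w * (toGL z)⁻¹.val) := by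
  induction z using induction_on generalizing u w with
  | one => simp
  | root i j h r =>
    rw [conj_root_skewTransv h, coe_toGL_root h, coe_toGL_root_inv h, transpose_transvection]
  | mul x y hx hy =>
    rw [map_mul, MulAut.mul_apply, hy, hx, map_mul, _root_.mul_inv_rev, Units.val_mul,
      Units.val_mul, transpose_mul, mulVec_mulVec]
    simp only [Matrix.mul_assoc]

theorem map_skewTransv (φ : A →+* B) (u : Fin n → A) (w : Matrix (Fin n) (Fin n) A) :
    map φ (skewTransv u w) = skewTransv (φ ∘ u) (w.map φ) := by
  induction w using Matrix.induction_on' with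
  | h_zero => simp
  | h_add w w' hw hw' =>
    rw [skewTransv_add, map_mul, hw, hw', Matrix.map_add _ (map_add φ), skewTransv_add]
  | h_std_basis i j c =>
    obtain ⟨k, hki, hkj, -⟩ := exists_ne_and_ne_and_ne i j i
    have hkoszul : φ ∘ koszul i j u c = koszul i j (φ ∘ u) (φ c) := by
      ext m
      simp [koszul, Pi.single_apply, apply_ite φ]
    rw [map_single, skewTransv_single, skewTransv_single, koszulTransv_eq hki hkj,
      koszulTransv_eq hki hkj, map_transv, hkoszul]

theorem toGL_skewTransv (u : Fin n → A) (w : Matrix (Fin n) (Fin n) A) :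
    (toGL (skewTransv u w) : Matrix (Fin n) (Fin n) A) = 1 + vecMulVec u ((w - wᵀ) *ᵥ u) := by
  induction w using Matrix.induction_on' with
  | h_zero => simp
  | h_add w w' hw hw' =>
    have hsub : w + w' - (w + w')ᵀ = (w - wᵀ) + (w' - w'ᵀ) := by
      rw [transpose_add]
      abel
    rw [skewTransv_add, map_mul, Units.val_mul, hw, hw', hsub, add_mulVec, vecMulVec_add]
    simp only [mul_add, add_mul, mul_one, one_mul, vecMulVec_mul_vecMulVec,
      dotProduct_sub_transpose_mulVec, zero_smul, vecMulVec_zero, add_zero]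
    abel
  | h_std_basis i j c =>
    obtain ⟨k, hki, hkj, -⟩ := exists_ne_and_ne_and_ne i j i
    rw [skewTransv_single, koszulTransv_eq hki hkj, toGL_transv (koszul_apply_of_ne hki hkj u c)
      (dotProduct_koszul i j u c), single_sub_transpose_mulVec]

end ToGL

/-! ### Transvections whose vector has denominators -/

section Localization

open Matrix

variable {n : ℕ} {A C : Type} [CommRing A] [CommRing C] [Algebra A C] (S : Submonoid A)
  [IsLocalization S C]

theorem exists_comp_eq_smul (u : Fin n → C) :
    ∃ t ∈ S, ∃ v : Fin n → A, algebraMap A C ∘ v = t • u := by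
  obtain ⟨t, ht⟩ := IsLocalization.exist_integer_multiples_of_finite S u
  choose v hv using ht
  exact ⟨t, t.2, v, funext hv⟩

theorem exists_smul_eq_smul_of_comp_eq {u v : Fin n → A}
    (h : algebraMap A C ∘ u = algebraMap A C ∘ v) : ∃ t ∈ S, t • u = t • v := by
  choose t ht using fun i ↦ (IsLocalization.eq_iff_exists S C).1 (congrFun h i)
  refine ⟨∏ i, t i, Submonoid.prod_mem _ fun i _ ↦ (t i).2, funext fun i ↦ ?_⟩
  obtain ⟨d, hd⟩ := Finset.dvd_prod_of_mem (fun i ↦ (t i : A)) (Finset.mem_univ i)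
  rw [Pi.smul_apply, Pi.smul_apply, hd, mul_comm, mul_smul, mul_smul, smul_eq_mul, smul_eq_mul,
    smul_eq_mul, smul_eq_mul, ht]

theorem smul_bijective_of_mem (C : Type) [CommRing C] [Algebra A C] [IsLocalization S C]
    (M : Type*) [AddCommGroup M] [Module A M] [Module C M] [IsScalarTower A C M] {t : A}
    (ht : t ∈ S) : Function.Bijective (t • · : M → M) := by
  simpa only [algebraMap_smul] using (IsLocalization.map_units C ⟨t, ht⟩).smul_bijective (β := M)

theorem exists_smul_eq_of_mem (C : Type) [CommRing C] [Algebra A C] [IsLocalization S C]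
    {M : Type*} [AddCommGroup M] [Module A M] [Module C M] [IsScalarTower A C M] {t : A}
    (ht : t ∈ S) (m : M) : ∃ m', t • m' = m :=
  (smul_bijective_of_mem S C M ht).2 m

variable {J : Ideal C}

theorem exists_lift_pair (u : Fin n → C) (m : Matrix (Fin n) (Fin n) J) :
    ∃ p : (Fin n → A) × Matrix (Fin n) (Fin n) J, ∃ t ∈ S,
      algebraMap A C ∘ p.1 = t • u ∧ (t * t) • p.2 = m := by
  obtain ⟨t, ht, v, hv⟩ := exists_comp_eq_smul S u
  obtain ⟨m', hm⟩ := exists_smul_eq_of_mem S C (mul_mem ht ht) m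
  exact ⟨(v, m'), t, ht, hv, hm⟩

variable {S} (σ : J →ₗ[A] A)

theorem sum_mul_apply_smul {t : A} {u : Fin n → C} {v : Fin n → A}
    (hv : algebraMap A C ∘ v = t • u) (c : Fin n → C) (s : J) :
    ∑ k, v k * σ (c k • s) = σ ((c ⬝ᵥ u) • t • s) := by
  have hterm (k : Fin n) : v k * σ (c k • s) = σ ((c k * u k) • t • s) := by
    have hk : algebraMap A C (v k) = algebraMap A C t * u k := by
      rw [← Algebra.smul_def]
      exact congrFun hv k
    rw [← smul_eq_mul, ← map_smul, ← algebraMap_smul C (v k), hk, ← algebraMap_smul C t, smul_smul,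
      smul_smul]
    congr 2
    ring
  rw [Finset.sum_congr rfl fun k _ ↦ hterm k, ← map_sum, ← Finset.sum_smul, dotProduct]

theorem sum_mul_apply_mul_smul {t : A} {u : Fin n → C} {v : Fin n → A}
    (hv : algebraMap A C ∘ v = t • u) (c : C) (x : Fin n → C) (s : J) :
    ∑ k, v k * σ ((c * x k) • s) = σ ((c * (x ⬝ᵥ u)) • t • s) := by
  rw [← smul_eq_mul c, ← smul_dotProduct, ← sum_mul_apply_smul σ hv]
  rfl

theorem apply_algebraMap_smul (r : A) (s : J) : σ (algebraMap A C r • s) = r * σ s := by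
  rw [algebraMap_smul, map_smul, smul_eq_mul]

theorem transpose_mul_mul_apply_smul (x y : Fin n → C) (s : J)
    (w : Matrix (Fin n) (Fin n) A) :
    wᵀ * (of fun i j ↦ σ ((x i * y j) • s)) * w = of fun i j ↦
      σ (((x ᵥ* w.map (algebraMap A C)) i * (y ᵥ* w.map (algebraMap A C)) j) • s) := by
  ext i j
  simp only [Matrix.mul_apply, transpose_apply, of_apply, vecMul, dotProduct, map_apply,
    Finset.sum_mul_sum, Finset.sum_smul, map_sum]
  simp only [Finset.sum_mul]
  rw [Finset.sum_comm]
  refine Finset.sum_congr rfl fun a _ ↦ Finset.sum_congr rfl fun b _ ↦ ?_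
  rw [mul_right_comm, ← apply_algebraMap_smul, smul_smul, map_mul]
  congr 2
  ring

theorem algebraMap_dotProduct {b c : C} {u v : Fin n → C} {u' v' : Fin n → A}
    (hu : algebraMap A C ∘ u' = b • u) (hv : algebraMap A C ∘ v' = c • v) :
    algebraMap A C (u' ⬝ᵥ v') = b * c * (u ⬝ᵥ v) := by
  rw [RingHom.map_dotProduct, hu, hv, smul_dotProduct, dotProduct_smul, smul_smul, smul_eq_mul]

variable [Fact (4 ≤ n)] (S)

theorem skewTransv_eq_of_lifts {u : Fin n → C} {t t' : A} (ht' : t' ∈ S)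
    {v v' : Fin n → A} (hv : algebraMap A C ∘ v = t • u) (hv' : algebraMap A C ∘ v' = t' • u)
    {m m' : Matrix (Fin n) (Fin n) J} (hm : (t * t) • m = (t' * t') • m') :
    skewTransv v (m.map σ) = skewTransv v' (m'.map σ) := by
  have hcomp (r : A) (w : Fin n → A) :
      algebraMap A C ∘ (r • w) = r • (algebraMap A C ∘ w) := by
    ext i
    simp [Algebra.smul_def]
  obtain ⟨r, hr, hrv⟩ := exists_smul_eq_smul_of_comp_eq S (C := C) (u := t' • v) (v := t • v') <| by
    rw [hcomp, hcomp, hv, hv', smul_comm]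
  obtain ⟨m₀, rfl⟩ := exists_smul_eq_of_mem S C (mul_mem (mul_mem hr ht') (mul_mem hr ht')) m
  obtain rfl : (r * t * (r * t)) • m₀ = m' := by
    refine (smul_bijective_of_mem S C _ (mul_mem ht' ht')).1 (Eq.trans ?_ hm)
    simp only [smul_smul]
    congr 1
    ring
  have hmap (d : A) : (d • m₀).map σ = d • m₀.map σ := by
    ext i j
    exact map_smul σ d _
  simp only [hmap, ← skewTransv_smul]
  rw [mul_smul, hrv, mul_smul]

/-- The element of `St(n, A)` that `skewTransv u m` ought to be for a vector `u` over the
localization `C` of `A` and a matrix `m` over an ideal `J` of `C` with an `A`-linear map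
`σ : J → A`. It is `skewTransv v (m'.map σ)` where `v` lifts `t • u` for some `t ∈ S` and
`m = t² m'`; by `relSkewTransv_eq` the choice is irrelevant. -/
noncomputable def relSkewTransv (u : Fin n → C) (m : Matrix (Fin n) (Fin n) J) :
    SteinbergGroup n A :=
  skewTransv (exists_lift_pair S u m).choose.1 ((exists_lift_pair S u m).choose.2.map σ)

variable {S}

theorem relSkewTransv_eq {u : Fin n → C} {t : A} (ht : t ∈ S) {v : Fin n → A}
    (hv : algebraMap A C ∘ v = t • u) (m : Matrix (Fin n) (Fin n) J) :
    relSkewTransv S σ u ((t * t) • m) = skewTransv v (m.map σ) := by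
  obtain ⟨t', -, hv', hm'⟩ := (exists_lift_pair S u ((t * t) • m)).choose_spec
  exact skewTransv_eq_of_lifts S σ ht hv' hv hm'

variable (S)

theorem relSkewTransv_add (u : Fin n → C) (m m' : Matrix (Fin n) (Fin n) J) :
    relSkewTransv S σ u (m + m') = relSkewTransv S σ u m * relSkewTransv S σ u m' := by
  obtain ⟨t, ht, v, hv⟩ := exists_comp_eq_smul S u
  obtain ⟨m, rfl⟩ := exists_smul_eq_of_mem S C (mul_mem ht ht) m
  obtain ⟨m', rfl⟩ := exists_smul_eq_of_mem S C (mul_mem ht ht) m'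
  simp only [← smul_add, relSkewTransv_eq σ ht hv]
  rw [← skewTransv_add, Matrix.map_add _ (map_add σ)]

/-- The element of `St(n, A)` playing the role of the transvection `1 + s (u xᵀ)` for vectors
`u, x, y` over the localization `C` of `A` with `x · u = 0` and `y · u = 1`, and `s ∈ J`. -/
noncomputable def relTransv (u x y : Fin n → C) (s : J) : SteinbergGroup n A :=
  relSkewTransv S σ u (of fun i j ↦ (x i * y j) • s)

variable (u x x' y y' : Fin n → C) (s s' : J) (c : C)

theorem relTransv_add :
    relTransv S σ u x y (s + s') = relTransv S σ u x y s * relTransv S σ u x y s' := by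
  rw [relTransv, relTransv, relTransv, ← relSkewTransv_add]
  congr 1
  ext i j
  simp

theorem relTransv_add_left :
    relTransv S σ u (x + x') y s = relTransv S σ u x y s * relTransv S σ u x' y s := by
  rw [relTransv, relTransv, relTransv, ← relSkewTransv_add]
  congr 1
  ext i j
  simp [add_mul]

theorem relTransv_add_right :
    relTransv S σ u x (y + y') s = relTransv S σ u x y s * relTransv S σ u x y' s := by
  rw [relTransv, relTransv, relTransv, ← relSkewTransv_add]
  congr 1
  ext i j
  simp [mul_add, add_mul]

theorem relTransv_smul_left : relTransv S σ u (c • x) y s = relTransv S σ u x y (c • s) := by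
  rw [relTransv, relTransv]
  congr 1
  ext i j
  simp [mul_comm, mul_left_comm]

theorem relTransv_zero : relTransv S σ u x y 0 = 1 := by
  rw [← mul_left_cancel_iff (a := relTransv S σ u x y 0), ← relTransv_add, add_zero, mul_one]

theorem relTransv_neg : relTransv S σ u x y (-s) = (relTransv S σ u x y s)⁻¹ := by
  rw [eq_inv_iff_mul_eq_one, ← relTransv_add, neg_add_cancel, relTransv_zero]

variable {S u} in
theorem relTransv_eq {t : A} (ht : t ∈ S) {v : Fin n → A} (hv : algebraMap A C ∘ v = t • u) :
    relTransv S σ u x y ((t * t) • s) = skewTransv v (of fun i j ↦ σ ((x i * y j) • s)) := by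
  have hsmul : (of fun i j ↦ (x i * y j) • (t * t) • s) = (t * t) • of fun i j ↦ (x i * y j) • s :=
    Matrix.ext fun i j ↦ smul_comm (x i * y j) (t * t) s
  rw [relTransv, hsmul, relSkewTransv_eq σ ht hv]
  rfl

variable {u x y} in
theorem relTransv_eq_one {z : Fin n → C} (hx : x ⬝ᵥ u = 0) (hy : y ⬝ᵥ u = 0) (hz : z ⬝ᵥ u = 1) :
    relTransv S σ u x y s = 1 := by
  obtain ⟨t, ht, v, hv⟩ := exists_comp_eq_smul S u
  obtain ⟨s, rfl⟩ := exists_smul_eq_of_mem S C (mul_mem (mul_mem ht ht) ht) s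
  rw [mul_smul, relTransv_eq σ x y _ ht hv,
    ← skewTransv_koszul v fun i j k ↦ σ ((x i * y j * z k) • s)]
  congr 1
  ext i j
  have hxk (k : Fin n) : x k * y i * z j = y i * z j * x k := by ring
  have hyk (k : Fin n) : x j * y k * z i = x j * z i * y k := by ring
  simp only [of_apply, mul_add, Finset.sum_add_distrib, hxk, hyk, sum_mul_apply_mul_smul σ hv, hx,
    hy, hz]
  simp

theorem conj_relTransv (z : SteinbergGroup n A) :
    MulAut.conj z (relTransv S σ u x y s) =
      relTransv S σ ((toGL (map (algebraMap A C) z)).val *ᵥ u)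
        (x ᵥ* (toGL (map (algebraMap A C) z))⁻¹.val)
        (y ᵥ* (toGL (map (algebraMap A C) z))⁻¹.val) s := by
  obtain ⟨t, ht, v, hv⟩ := exists_comp_eq_smul S u
  obtain ⟨s, rfl⟩ := exists_smul_eq_of_mem S C (mul_mem ht ht) s
  have hv' : algebraMap A C ∘ ((toGL z).val *ᵥ v) =
      t • ((toGL (map (algebraMap A C) z)).val *ᵥ u) := by
    ext i
    rw [← mulVec_smul, ← hv, toGL_map]
    exact RingHom.map_mulVec (algebraMap A C) _ v i
  have hinv : (toGL z)⁻¹.val.map (algebraMap A C) = (toGL (map (algebraMap A C) z))⁻¹.val := by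
    rw [← map_inv, ← map_inv, ← map_inv, toGL_map]
    rfl
  rw [relTransv_eq σ x y s ht hv, relTransv_eq σ _ _ s ht hv', conj_skewTransv,
    transpose_mul_mul_apply_smul, hinv]

theorem map_relTransv (hσ : ∀ s, algebraMap A C (σ s) = s) :
    map (algebraMap A C) (relTransv S σ u x y s) = skewTransv u ((s : C) • vecMulVec x y) := by
  obtain ⟨t, ht, v, hv⟩ := exists_comp_eq_smul S u
  obtain ⟨s, rfl⟩ := exists_smul_eq_of_mem S C (mul_mem ht ht) s
  rw [relTransv_eq σ x y s ht hv, map_skewTransv, hv, ← algebraMap_smul C t u, skewTransv_smul]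
  congr 1
  ext i j
  simp only [Matrix.smul_apply, map_apply, of_apply, hσ, SetLike.val_smul, smul_eq_mul,
    SetLike.val_smul_of_tower, Algebra.smul_def, map_mul, vecMulVec_apply]
  ring

theorem map_relTransv_eq_one {B : Type} [CommRing B] {p : A →+* B} (hp : ∀ s, p (σ s) = 0) :
    map p (relTransv S σ u x y s) = 1 := by
  obtain ⟨t, ht, v, hv⟩ := exists_comp_eq_smul S u
  obtain ⟨s, rfl⟩ := exists_smul_eq_of_mem S C (mul_mem ht ht) s
  rw [relTransv_eq σ x y s ht hv, map_skewTransv]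
  convert skewTransv_zero _
  ext i j
  exact hp _

variable {S u x y}

theorem toGL_relTransv {t : A} (ht : t ∈ S) {v : Fin n → A} (hv : algebraMap A C ∘ v = t • u)
    (hx : x ⬝ᵥ u = 0) (hy : y ⬝ᵥ u = 1) :
    (toGL (relTransv S σ u x y ((t * t) • s))).val =
      1 + vecMulVec v fun i ↦ σ (x i • t • s) := by
  rw [relTransv_eq σ x y s ht hv, toGL_skewTransv]
  congr 2
  ext i
  change ∑ k, (σ ((x i * y k) • s) - σ ((x k * y i) • s)) * v k = _
  simp only [sub_mul, Finset.sum_sub_distrib, mul_comm (σ _), mul_comm (x _) (y i),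
    sum_mul_apply_mul_smul σ hv, hx, hy]
  simp

theorem toGL_inv_relTransv {t : A} (ht : t ∈ S) {v : Fin n → A}
    (hv : algebraMap A C ∘ v = t • u) (hx : x ⬝ᵥ u = 0) (hy : y ⬝ᵥ u = 1) :
    (toGL (relTransv S σ u x y ((t * t) • s)))⁻¹.val =
      1 - vecMulVec v fun i ↦ σ (x i • t • s) := by
  rw [← map_inv, ← relTransv_neg, ← smul_neg, toGL_relTransv σ (-s) ht hv hx hy, sub_eq_add_neg,
    ← vecMulVec_neg]
  congr 2
  ext i
  simp

end Localization

/-! ### Root elements relative to a frame -/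

section RelRoot

open Matrix MatrixGroups

variable {n : ℕ} {A C : Type} [CommRing A] [CommRing C] [Algebra A C]

section Frame

variable (h : GL (Fin n) C) {i j k l : Fin n}

theorem row_inv_dotProduct_col (i j : Fin n) :
    h⁻¹.val.row j ⬝ᵥ h.val.col i = if j = i then 1 else 0 := by
  rw [← Matrix.one_apply, ← Units.inv_mul h]
  rfl

theorem row_inv_dotProduct_col_self (i : Fin n) : h⁻¹.val.row i ⬝ᵥ h.val.col i = 1 := by
  rw [row_inv_dotProduct_col, if_pos rfl]

theorem row_inv_dotProduct_col_of_ne (hji : j ≠ i) : h⁻¹.val.row j ⬝ᵥ h.val.col i = 0 := by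
  rw [row_inv_dotProduct_col, if_neg hji]

theorem coe_inv_transvectionGL (hij : i ≠ j) (b : C) :
    (transvectionGL i j b)⁻¹.val = transvection i j (-b) := by
  rw [← toGL_root, coe_toGL_root_inv hij]

theorem col_mul_transvectionGL_of_ne (hij : i ≠ j) (b : C) (hkj : k ≠ j) :
    (h * transvectionGL i j b).val.col k = h.val.col k := by
  rw [Units.val_mul, coe_transvectionGL hij]
  exact funext fun a ↦ mul_transvection_apply_of_ne _ _ _ _ hkj _ _

theorem row_inv_mul_transvectionGL_of_ne (hij : i ≠ j) (b : C) (hki : k ≠ i) :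
    (h * transvectionGL i j b)⁻¹.val.row k = h⁻¹.val.row k := by
  rw [_root_.mul_inv_rev, Units.val_mul, coe_inv_transvectionGL hij]
  exact funext fun a ↦ transvection_mul_apply_of_ne _ _ _ _ hki _ _

theorem row_inv_mul_transvectionGL_self (hij : i ≠ j) (b : C) :
    (h * transvectionGL i j b)⁻¹.val.row i = -b • h⁻¹.val.row j + h⁻¹.val.row i := by
  rw [_root_.mul_inv_rev, Units.val_mul, coe_inv_transvectionGL hij, add_comm]
  exact funext fun a ↦ transvection_mul_apply_same _ _ _ _ _

theorem coe_mul_transvectionGL_mul_inv (hij : i ≠ j) (b : C) :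
    (h * transvectionGL i j b * h⁻¹).val = 1 + b • vecMulVec (h.val.col i) (h⁻¹.val.row j) := by
  rw [Units.val_mul, Units.val_mul, coe_transvectionGL hij, transvection, mul_add, add_mul, mul_one,
    Units.mul_inv, ← mulVec_single_one, ← single_one_vecMul, ← vecMulVec_mul, ← mul_vecMulVec,
    vecMulVec_single_single, ← Matrix.smul_mul, ← Matrix.mul_smul, smul_single, smul_eq_mul,
    mul_one, mul_one]

theorem mul_transvectionGL_mul_transvectionGL (hij : i ≠ j) (hil : i ≠ l) (hjl : j ≠ l) (b c : C) :
    h * transvectionGL i j b * transvectionGL j l c =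
      h * transvectionGL j l c * h⁻¹ * (h * transvectionGL i l (b * c) * transvectionGL i j b) := by
  have hcomm : Commute (transvectionGL j l c) (transvectionGL i l (b * c)) := by
    rw [← toGL_root, ← toGL_root]
    exact (commute_root hil.symm hjl _ _).map toGL
  have hrel : transvectionGL i j b * transvectionGL j l c =
      transvectionGL i l (b * c) * transvectionGL j l c * transvectionGL i j b := by
    rw [← commutatorElement_eq_iff, ← toGL_root, ← toGL_root, ← toGL_root, ← map_commutatorElement,
      commutator_root hij hjl hil]
  rw [mul_assoc, hrel, ← hcomm.eq]
  group

end Frame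

variable {S : Submonoid A} [IsLocalization S C] {J : Ideal C} (σ : J →ₗ[A] A)

theorem dotProduct_mul_apply_smul {r : A} {c : C} {u x : Fin n → C} {v x₁ : Fin n → A}
    (hx₁ : algebraMap A C ∘ x₁ = c • x) (hv : algebraMap A C ∘ v = r • u) (d : C) (s : J) :
    (x₁ ⬝ᵥ v) * σ (d • r • s) = σ (((x ⬝ᵥ u) * (c * d)) • (r * r) • s) := by
  rw [← algebraMap_smul C r u] at hv
  rw [← apply_algebraMap_smul, algebraMap_dotProduct hx₁ hv, ← algebraMap_smul C r s,
    ← algebraMap_smul C (r * r) s, smul_smul, smul_smul, smul_smul, map_mul]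
  congr 2
  ring

variable (S) in
theorem exists_lifts_col_row (h : GL (Fin n) C) (i j : Fin n) (b : C) :
    ∃ t₀ ∈ S, ∀ t, t₀ ∣ t → ∃ r ∈ S, ∃ (β γ : C) (u₁ x₁ y₁ : Fin n → A),
      algebraMap A C ∘ u₁ = r • h.val.col i ∧ algebraMap A C ∘ x₁ = β • h⁻¹.val.row j ∧
        algebraMap A C ∘ y₁ = γ • h⁻¹.val.row i ∧ (r * r) • (β * γ) = t • b := by
  obtain ⟨r, hr, u₁, hu₁⟩ := exists_comp_eq_smul S (h.val.col i)
  obtain ⟨p, hp, x₁, hx₁⟩ := exists_comp_eq_smul S (b • h⁻¹.val.row j)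
  obtain ⟨q, hq, y₁, hy₁⟩ := exists_comp_eq_smul S (h⁻¹.val.row i)
  refine ⟨r * r * (p * q), mul_mem (mul_mem hr hr) (mul_mem hp hq), ?_⟩
  rintro _ ⟨d, rfl⟩
  refine ⟨r, hr, (d * p) • b, algebraMap A C q, u₁, d • x₁, y₁, hu₁, ?_, ?_, ?_⟩
  · rw [smul_assoc, mul_smul, ← hx₁]
    exact funext fun a ↦ (map_mul _ _ _).trans (Algebra.smul_def _ _).symm
  · rw [algebraMap_smul, hy₁]
  · simp only [Algebra.smul_def, map_mul]
    ring

variable [Fact (4 ≤ n)]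

theorem conj_relTransv_skewTransv_vecMulVec {t : A} (ht : t ∈ S) {β γ : C}
    {u x y u' x' y' : Fin n → C} {u₁ x₁ y₁ : Fin n → A}
    (hu₁ : algebraMap A C ∘ u₁ = t • u) (hx₁ : algebraMap A C ∘ x₁ = β • x)
    (hy₁ : algebraMap A C ∘ y₁ = γ • y) (hx'u' : x' ⬝ᵥ u' = 0) (hy'u' : y' ⬝ᵥ u' = 1)
    (hx'u : x' ⬝ᵥ u = 0) (hxu' : x ⬝ᵥ u' = 1) (hyu' : y ⬝ᵥ u' = 0) (s : J) :
    MulAut.conj (relTransv S σ u' x' y' s) (skewTransv u₁ (vecMulVec x₁ y₁)) =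
      skewTransv u₁ (vecMulVec x₁ y₁) * (relTransv S σ u x' y ((t * t) • (β * γ) • s))⁻¹ := by
  obtain ⟨r, hr, v, hv⟩ := exists_comp_eq_smul S u'
  obtain ⟨s, rfl⟩ := exists_smul_eq_of_mem S C (mul_mem hr hr) s
  set g : Fin n → A := fun i ↦ σ (x' i • r • s)
  have hgu : g ⬝ᵥ u₁ = 0 := by
    rw [dotProduct_comm]
    exact (sum_mul_apply_smul σ hu₁ x' _).trans (by rw [hx'u, zero_smul, map_zero])
  have hxg : (x₁ ⬝ᵥ v) • g = fun i ↦ σ ((β * x' i) • (r * r) • s) := by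
    ext i
    rw [Pi.smul_apply, smul_eq_mul, dotProduct_mul_apply_smul σ hx₁ hv, hxu', one_mul]
  have hyg : (y₁ ⬝ᵥ v) • g = 0 := by
    ext i
    rw [Pi.smul_apply, smul_eq_mul, dotProduct_mul_apply_smul σ hy₁ hv, hyu', zero_mul, zero_smul,
      map_zero, Pi.zero_apply]
  have hinv (z : Fin n → A) :
      z ᵥ* (toGL (relTransv S σ u' x' y' ((r * r) • s)))⁻¹.val = z - (z ⬝ᵥ v) • g := by
    rw [toGL_inv_relTransv σ s hr hv hx'u' hy'u', vecMul_sub, vecMul_one, vecMul_vecMulVec]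
  have hrel : skewTransv u₁ (vecMulVec ((x₁ ⬝ᵥ v) • g) y₁) =
      relTransv S σ u x' y ((t * t) • (β * γ) • (r * r) • s) := by
    rw [relTransv_eq σ x' y _ ht hu₁, hxg]
    congr 1
    ext i j
    rw [vecMulVec_apply, mul_comm, ← apply_algebraMap_smul, of_apply, smul_smul, smul_smul,
      show algebraMap A C (y₁ j) = γ * y j from congrFun hy₁ j]
    congr 2
    ring
  rw [conj_skewTransv, toGL_relTransv σ s hr hv hx'u' hy'u', add_mulVec, one_mulVec,
    vecMulVec_mulVec, hgu, ← hrel, ← skewTransv_neg, ← skewTransv_add, mul_vecMulVec, vecMulVec_mul,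
    mulVec_transpose, hinv, hinv, hyg, sub_zero, sub_vecMulVec, sub_eq_add_neg]
  simp

variable (S)

/-- The element of `St(n, A)` playing the role of the root element `x_{ij}(s)`, `s ∈ J`, conjugated
by a matrix `h` over the localization `C` of `A`. -/
noncomputable def relRoot (h : GL (Fin n) C) (i j : Fin n) (s : J) : SteinbergGroup n A :=
  relTransv S σ (h.val.col i) (h⁻¹.val.row j) (h⁻¹.val.row i) s

variable (h : GL (Fin n) C) {i j k l : Fin n}

theorem relRoot_add (i j : Fin n) (s t : J) :
    relRoot S σ h i j (s + t) = relRoot S σ h i j s * relRoot S σ h i j t :=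
  relTransv_add ..

theorem conj_relRoot (z : SteinbergGroup n A) (i j : Fin n) (s : J) :
    MulAut.conj z (relRoot S σ h i j s) =
      relRoot S σ (toGL (map (algebraMap A C) z) * h) i j s := by
  rw [relRoot, conj_relTransv, relRoot, _root_.mul_inv_rev]
  rfl

theorem relRoot_one (hij : i ≠ j) (s : J) :
    relRoot S σ (1 : GL (Fin n) C) i j s = root i j (σ s) := by
  have hlift : algebraMap A C ∘ (Pi.single i 1 : Fin n → A) =
      (1 : A) • (1 : GL (Fin n) C).val.col i := by
    rw [comp_single, map_one, one_smul, ← mulVec_single_one, Units.val_one, one_mulVec]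
  rw [relRoot, ← one_smul A s, ← one_mul (1 : A), relTransv_eq σ _ _ s (one_mem S) hlift,
    ← skewTransv_single_one hij, one_mul, one_smul]
  congr 1
  ext a b
  by_cases hja : j = a <;> by_cases hib : i = b <;> simp [one_apply, hja, hib]

theorem relRoot_toGL_map (hij : i ≠ j) (q : SteinbergGroup n A) (s : J) :
    relRoot S σ (toGL (map (algebraMap A C) q)) i j s = MulAut.conj q (root i j (σ s)) := by
  rw [← relRoot_one S σ hij, conj_relRoot, mul_one]

theorem map_relRoot_eq_one {B : Type} [CommRing B] {p : A →+* B} (hp : ∀ s, p (σ s) = 0)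
    (i j : Fin n) (s : J) : map p (relRoot S σ h i j s) = 1 :=
  map_relTransv_eq_one S σ _ _ _ s hp

theorem relRoot_mul_transvectionGL_of_ne (hij : i ≠ j) (hkl : k ≠ l) (hkj : k ≠ j) (hli : l ≠ i)
    (b : C) (s : J) : relRoot S σ (h * transvectionGL i j b) k l s = relRoot S σ h k l s := by
  rw [relRoot, col_mul_transvectionGL_of_ne h hij b hkj,
    row_inv_mul_transvectionGL_of_ne h hij b hli, relRoot]
  obtain rfl | hki := eq_or_ne k i
  · have hzero : (-b • h⁻¹.val.row j) ⬝ᵥ h.val.col k = 0 := by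
      rw [smul_dotProduct, row_inv_dotProduct_col_of_ne h hij.symm, smul_zero]
    rw [row_inv_mul_transvectionGL_self h hij, relTransv_add_right, relTransv_eq_one S σ s
      (row_inv_dotProduct_col_of_ne h hkl.symm) hzero (row_inv_dotProduct_col_self h k), one_mul]
  · rw [row_inv_mul_transvectionGL_of_ne h hij b hki]

theorem relRoot_mul_transvectionGL_of_eq_right (hij : i ≠ j) (hki : k ≠ i) (hkj : k ≠ j) (b : C)
    (s : J) : relRoot S σ (h * transvectionGL i j b) k i s =
      relRoot S σ h k j (-(b • s)) * relRoot S σ h k i s := by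
  rw [relRoot, col_mul_transvectionGL_of_ne h hij b hkj, row_inv_mul_transvectionGL_self h hij b,
    row_inv_mul_transvectionGL_of_ne h hij b hki, relTransv_add_left, relTransv_smul_left, neg_smul,
    relRoot, relRoot]

theorem toGL_skewTransv_col_row (hij : i ≠ j) (c : C) :
    toGL (skewTransv (h.val.col i) (c • vecMulVec (h⁻¹.val.row j) (h⁻¹.val.row i))) =
      h * transvectionGL i j c * h⁻¹ := by
  apply Units.ext
  rw [toGL_skewTransv, coe_mul_transvectionGL_mul_inv h hij, transpose_smul, transpose_vecMulVec,
    ← smul_sub, smul_mulVec, sub_mulVec, vecMulVec_mulVec, vecMulVec_mulVec,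
    row_inv_dotProduct_col_self, row_inv_dotProduct_col_of_ne h hij.symm]
  simp

theorem toGL_map_relRoot (hσ : ∀ s, algebraMap A C (σ s) = s) (hij : i ≠ j) (s : J) :
    toGL (map (algebraMap A C) (relRoot S σ h i j s)) = h * transvectionGL i j (s : C) * h⁻¹ := by
  rw [relRoot, map_relTransv S σ _ _ _ s hσ, toGL_skewTransv_col_row h hij]

theorem map_relRoot (hσ : ∀ s, algebraMap A C (σ s) = s) (hij : i ≠ j) (q : SteinbergGroup n C)
    (s : J) :
    map (algebraMap A C) (relRoot S σ (toGL q) i j s) = MulAut.conj q (root i j (s : C)) := by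
  rw [relRoot, map_relTransv S σ _ _ _ s hσ, ← skewTransv_single_one hij, conj_skewTransv,
    mulVec_single_one, ← single_one_vecMul, ← single_one_vecMul, ← mulVec_transpose,
    ← vecMulVec_mul, ← mul_vecMulVec, vecMulVec_single_single, ← Matrix.smul_mul, ← Matrix.mul_smul,
    smul_single, smul_eq_mul, mul_one, mul_one]

theorem conj_relRoot_relRoot (hσ : ∀ s, algebraMap A C (σ s) = s) (hij : i ≠ j) (s : J)
    (k l : Fin n) (t : J) :
    MulAut.conj (relRoot S σ h i j s) (relRoot S σ h k l t) =
      relRoot S σ (h * transvectionGL i j (s : C)) k l t := by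
  rw [conj_relRoot, toGL_map_relRoot S σ h hσ hij, inv_mul_cancel_right]

theorem commute_relRoot (hσ : ∀ s, algebraMap A C (σ s) = s) (hij : i ≠ j) (hkl : k ≠ l)
    (hjk : j ≠ k) (hil : i ≠ l) (s t : J) :
    Commute (relRoot S σ h i j s) (relRoot S σ h k l t) := by
  rw [← conj_eq_self_iff_commute, conj_relRoot_relRoot S σ h hσ hij,
    relRoot_mul_transvectionGL_of_ne S σ h hij hkl hjk.symm hil.symm]

theorem map_skewTransv_vecMulVec {t : A} {β γ : C} {u x y : Fin n → C} {u₁ x₁ y₁ : Fin n → A}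
    (hu₁ : algebraMap A C ∘ u₁ = t • u) (hx₁ : algebraMap A C ∘ x₁ = β • x)
    (hy₁ : algebraMap A C ∘ y₁ = γ • y) :
    map (algebraMap A C) (skewTransv u₁ (vecMulVec x₁ y₁)) =
      skewTransv u (((t * t) • (β * γ)) • vecMulVec x y) := by
  have hxy : (vecMulVec x₁ y₁).map (algebraMap A C) = (β * γ) • vecMulVec x y := by
    rw [mul_smul, ← vecMulVec_smul, ← smul_vecMulVec, ← hx₁, ← hy₁]
    ext i j
    exact map_mul (algebraMap A C) _ _
  rw [map_skewTransv, hu₁, hxy, ← algebraMap_smul C t u, skewTransv_smul, smul_smul,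
    Algebra.smul_def (t * t) (β * γ), map_mul]

theorem toGL_map_skewTransv_vecMulVec {t : A} {β γ : C} {u₁ x₁ y₁ : Fin n → A}
    (hu₁ : algebraMap A C ∘ u₁ = t • h.val.col i)
    (hx₁ : algebraMap A C ∘ x₁ = β • h⁻¹.val.row j)
    (hy₁ : algebraMap A C ∘ y₁ = γ • h⁻¹.val.row i) (hij : i ≠ j) :
    toGL (map (algebraMap A C) (skewTransv u₁ (vecMulVec x₁ y₁))) =
      h * transvectionGL i j ((t * t) • (β * γ)) * h⁻¹ := by
  rw [map_skewTransv_vecMulVec hu₁ hx₁ hy₁, toGL_skewTransv_col_row h hij]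

theorem relRoot_mul_transvectionGL_of_lifts {t : A} (ht : t ∈ S) {β γ : C} {u₁ x₁ y₁ : Fin n → A}
    (hu₁ : algebraMap A C ∘ u₁ = t • h.val.col i)
    (hx₁ : algebraMap A C ∘ x₁ = β • h⁻¹.val.row j)
    (hy₁ : algebraMap A C ∘ y₁ = γ • h⁻¹.val.row i) (hij : i ≠ j) (hik : i ≠ k) (hjk : j ≠ k)
    (s : J) :
    relRoot S σ (h * transvectionGL i j ((t * t) • (β * γ))) j k s =
      relRoot S σ h i k (((t * t) • (β * γ)) • s) * relRoot S σ h j k s := by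
  set c := (t * t) • (β * γ)
  set w := skewTransv u₁ (vecMulVec x₁ y₁)
  have hw : toGL (map (algebraMap A C) w) = h * transvectionGL i j c * h⁻¹ :=
    toGL_map_skewTransv_vecMulVec h hu₁ hx₁ hy₁ hij
  have hconj (k l : Fin n) (s : J) : MulAut.conj w (relRoot S σ h k l s) =
      relRoot S σ (h * transvectionGL i j c) k l s := by
    rw [conj_relRoot, hw, inv_mul_cancel_right]
  have hcomm : Commute w (relRoot S σ h i k (c • s)) := by
    rw [← conj_eq_self_iff_commute, hconj,
      relRoot_mul_transvectionGL_of_ne S σ h hij hik hij hik.symm]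
  have hconj' : MulAut.conj (relRoot S σ h j k s) w = w * (relRoot S σ h i k (c • s))⁻¹ := by
    rw [smul_assoc]
    exact conj_relTransv_skewTransv_vecMulVec σ ht hu₁ hx₁ hy₁
      (row_inv_dotProduct_col_of_ne h hjk.symm) (row_inv_dotProduct_col_self h j)
      (row_inv_dotProduct_col_of_ne h hik.symm) (row_inv_dotProduct_col_self h j)
      (row_inv_dotProduct_col_of_ne h hij) s
  rw [MulAut.conj_apply, mul_inv_eq_iff_eq_mul, hcomm.inv_right.eq, mul_assoc,
    eq_inv_mul_iff_mul_eq, ← mul_assoc] at hconj'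
  rw [← hconj, MulAut.conj_apply, ← hconj', mul_inv_cancel_right]

theorem exists_forall_dvd_relRoot_mul_transvectionGL (hij : i ≠ j) (b : C) :
    ∃ t₀ ∈ S, ∀ t, t₀ ∣ t →
      (∃ w : SteinbergGroup n A,
        toGL (map (algebraMap A C) w) = h * transvectionGL i j (t • b) * h⁻¹) ∧
      ∀ k, i ≠ k → j ≠ k → ∀ s, relRoot S σ (h * transvectionGL i j (t • b)) j k s =
        relRoot S σ h i k ((t • b) • s) * relRoot S σ h j k s := by
  obtain ⟨t₀, ht₀, hlifts⟩ := exists_lifts_col_row S h i j b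
  refine ⟨t₀, ht₀, fun t ht ↦ ?_⟩
  obtain ⟨r, hr, β, γ, u₁, x₁, y₁, hu₁, hx₁, hy₁, hrb⟩ := hlifts t ht
  rw [← hrb]
  exact ⟨⟨_, toGL_map_skewTransv_vecMulVec h hu₁ hx₁ hy₁ hij⟩, fun k hik hjk s ↦
    relRoot_mul_transvectionGL_of_lifts S σ h hr hu₁ hx₁ hy₁ hij hik hjk s⟩

theorem relRoot_mul_transvectionGL_of_eq_left (hij : i ≠ j) (hik : i ≠ k) (hjk : j ≠ k) (b : C)
    (s : J) : relRoot S σ (h * transvectionGL i j b) j k s =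
      relRoot S σ h i k (b • s) * relRoot S σ h j k s := by
  obtain ⟨l, hli, hlj, hlk⟩ := exists_ne_and_ne_and_ne i j k
  obtain ⟨t₁, ht₁, h₁⟩ := exists_forall_dvd_relRoot_mul_transvectionGL S σ h hli.symm b
  obtain ⟨t₂, ht₂, h₂⟩ := exists_forall_dvd_relRoot_mul_transvectionGL S σ h hlj.symm 1
  obtain ⟨t₃, ht₃, h₃⟩ := exists_forall_dvd_relRoot_mul_transvectionGL S σ
    (h * transvectionGL i j b) hlj.symm 1
  set t := t₁ * t₂ * t₃
  obtain ⟨s, rfl⟩ := exists_smul_eq_of_mem S C (mul_mem (mul_mem ht₁ ht₂) ht₃ : t ∈ S) s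
  replace h₁ := (h₁ t (dvd_mul_of_dvd_left (dvd_mul_right _ _) _)).2 k hik hlk s
  obtain ⟨⟨w, hw⟩, h₂⟩ := h₂ t (dvd_mul_of_dvd_left (dvd_mul_left _ _) _)
  replace h₃ := (h₃ t (dvd_mul_left _ _)).2 k hjk hlk s
  -- Both sides compute `relRoot S σ (h * transvectionGL i j b * transvectionGL j l t) l k s`.
  rw [mul_transvectionGL_mul_transvectionGL h hij hli.symm hlj.symm, ← hw, ← conj_relRoot,
    relRoot_mul_transvectionGL_of_ne S σ _ hij hlk hlj hik.symm, mul_smul_one, h₁, map_mul,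
    conj_relRoot, conj_relRoot, hw, inv_mul_cancel_right, h₂ k hjk hlk,
    relRoot_mul_transvectionGL_of_ne S σ _ hlj.symm hik hli.symm hjk.symm,
    relRoot_mul_transvectionGL_of_ne S σ h hij hlk hlj hik.symm, ← mul_assoc, mul_left_inj] at h₃
  rw [smul_assoc t (1 : C) s, one_smul] at h₃
  rw [smul_comm b t s, ← smul_assoc, h₃]

theorem commutator_relRoot (hσ : ∀ s, algebraMap A C (σ s) = s) (hij : i ≠ j) (hjk : j ≠ k)
    (hik : i ≠ k) (s t : J) :
    ⁅relRoot S σ h i j s, relRoot S σ h j k t⁆ = relRoot S σ h i k ((s : C) • t) := by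
  rw [← mul_left_inj, ← conj_eq_commutatorElement_mul, conj_relRoot_relRoot S σ h hσ hij,
    relRoot_mul_transvectionGL_of_eq_left S σ h hij hik hjk]

end RelRoot

/-! ### The representation in the wreath product -/

section Wreath

open Matrix MatrixGroups

variable {n : ℕ} {A C : Type} [CommRing A] [CommRing C] [Algebra A C] (S : Submonoid A)
  [IsLocalization S C] {J : Ideal C} (σ : J →ₗ[A] A) {ε : C →+* C} (hε : ∀ c, c - ε c ∈ J)
  [Fact (4 ≤ n)]

/-- The image of `x_{ij}(c)` under `toWreath`. The function component is the root element of the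
part `c - ε c ∈ J` of `c`, relative to the frame `h⁻¹` at the point `h`; the inverse accounts for
the convention `g • F = fun h ↦ F (g⁻¹ * h)` of the regular wreath product. -/
noncomputable def wreathRoot (i j : Fin n) (c : C) : SteinbergGroup n A ≀ᵣ GL (Fin n) C where
  left h := relRoot S σ h⁻¹ i j ⟨c - ε c, hε c⟩
  right := transvectionGL i j (ε c)

variable {i j k l : Fin n}

theorem wreathRoot_left_inv (i j : Fin n) (c : C) (h : GL (Fin n) C) :
    (wreathRoot S σ hε i j c).left h⁻¹ = relRoot S σ h i j ⟨c - ε c, hε c⟩ := by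
  simp only [wreathRoot, inv_inv]

theorem wreathRoot_right (i j : Fin n) (c : C) :
    (wreathRoot S σ hε i j c).right = transvectionGL i j (ε c) :=
  rfl

theorem wreath_mul_left_inv {G H : Type*} [Group G] [Group H] (x y : H ≀ᵣ G) (h : G) :
    (x * y).left h⁻¹ = x.left h⁻¹ * y.left (h * x.right)⁻¹ := by
  rw [RegularWreathProduct.mul_left, Pi.mul_apply, _root_.mul_inv_rev]

theorem wreath_ext {G H : Type*} [Group G] [Group H] {x y : H ≀ᵣ G}
    (hleft : ∀ h, x.left h⁻¹ = y.left h⁻¹) (hright : x.right = y.right) : x = y :=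
  RegularWreathProduct.ext (funext fun h ↦ by simpa only [inv_inv] using hleft h⁻¹) hright

theorem wreathRoot_add (hij : i ≠ j) (c d : C) :
    wreathRoot S σ hε i j c * wreathRoot S σ hε i j d = wreathRoot S σ hε i j (c + d) := by
  refine wreath_ext (fun h ↦ ?_) ?_
  · rw [wreath_mul_left_inv, wreathRoot_left_inv, wreathRoot_left_inv, wreathRoot_left_inv,
      wreathRoot_right, relRoot_mul_transvectionGL_of_ne S σ h hij hij hij hij.symm, ← relRoot_add]
    congr 1
    ext
    change c - ε c + (d - ε d) = c + d - ε (c + d)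
    rw [map_add, add_sub_add_comm]
  · simp only [RegularWreathProduct.mul_right, wreathRoot_right, ← toGL_root, ← map_mul, ← root_add,
      map_add]

variable {σ} (hσ : ∀ s, algebraMap A C (σ s) = s)

include hσ in
theorem commute_wreathRoot (hij : i ≠ j) (hkl : k ≠ l) (hjk : j ≠ k) (hil : i ≠ l) (c d : C) :
    Commute (wreathRoot S σ hε i j c) (wreathRoot S σ hε k l d) := by
  refine wreath_ext (fun h ↦ ?_) ?_
  · rw [wreath_mul_left_inv, wreath_mul_left_inv, wreathRoot_left_inv, wreathRoot_left_inv,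
      wreathRoot_left_inv, wreathRoot_left_inv, wreathRoot_right, wreathRoot_right,
      relRoot_mul_transvectionGL_of_ne S σ h hij hkl hjk.symm hil.symm,
      relRoot_mul_transvectionGL_of_ne S σ h hkl hij hil hjk]
    exact commute_relRoot S σ h hσ hij hkl hjk hil _ _
  · rw [RegularWreathProduct.mul_right, RegularWreathProduct.mul_right, wreathRoot_right,
      wreathRoot_right, ← toGL_root, ← toGL_root]
    exact (commute_root hjk hil _ _).map toGL

include hσ in
theorem commutator_wreathRoot (hij : i ≠ j) (hjk : j ≠ k) (hik : i ≠ k) (c d : C) :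
    ⁅wreathRoot S σ hε i j c, wreathRoot S σ hε j k d⁆ = wreathRoot S σ hε i k (c * d) := by
  rw [commutatorElement_eq_iff]
  refine wreath_ext (fun h ↦ ?_) ?_
  · set s : J := ⟨c - ε c, hε c⟩
    set t : J := ⟨d - ε d, hε d⟩
    have hsplit : relRoot S σ h i k ⟨c * d - ε (c * d), hε (c * d)⟩ *
        relRoot S σ h i k (-(ε d • s)) =
          relRoot S σ h i k (ε c • t) * relRoot S σ h i k ((s : C) • t) := by
      rw [← relRoot_add, ← relRoot_add]
      congr 1
      ext
      change c * d - ε (c * d) + -(ε d * (c - ε c)) = ε c * (d - ε d) + (c - ε c) * (d - ε d)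
      rw [map_mul]
      ring
    have hrel : relRoot S σ h i j s * relRoot S σ h j k t =
        relRoot S σ h i k ((s : C) • t) * relRoot S σ h j k t * relRoot S σ h i j s := by
      rw [← commutatorElement_eq_iff, commutator_relRoot S σ h hσ hij hjk hik]
    simp only [mul_assoc, wreath_mul_left_inv, wreathRoot_left_inv, wreathRoot_right]
    rw [relRoot_mul_transvectionGL_of_eq_left S σ h hij hik hjk,
      relRoot_mul_transvectionGL_of_ne S σ h hik hjk hjk hik.symm, ← mul_assoc h,
      relRoot_mul_transvectionGL_of_eq_right S σ _ hjk hij hik,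
      relRoot_mul_transvectionGL_of_ne S σ h hik hik hik hik.symm,
      relRoot_mul_transvectionGL_of_ne S σ h hik hij hik hij.symm,
      (commute_relRoot S σ h hσ hij hik hij.symm hik _ _).left_comm, hrel,
      (commute_relRoot S σ h hσ hjk hik hik.symm hjk _ _).left_comm]
    simp only [← mul_assoc]
    rw [← hsplit]
  · simp only [RegularWreathProduct.mul_right, wreathRoot_right, ← toGL_root]
    rw [← commutatorElement_eq_iff, ← map_commutatorElement, commutator_root hij hjk hik, map_mul]

/-- The representation of `St(n, C)` in the wreath product of `St(n, A)` and `GL(n, C)`. Its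
restriction to the relative subgroup of `J`, evaluated at the standard frame, inverts the map
induced by the localization `A → C`. -/
noncomputable def toWreath : SteinbergGroup n C →* SteinbergGroup n A ≀ᵣ GL (Fin n) C :=
  lift (wreathRoot S σ hε) (fun _ _ hij ↦ wreathRoot_add S σ hε hij)
    (fun _ _ _ _ hij hkl hjk hil ↦ commute_wreathRoot S hε hσ hij hkl hjk hil)
    (fun _ _ _ hij hjk hik ↦ commutator_wreathRoot S hε hσ hij hjk hik)

theorem toWreath_root (hij : i ≠ j) (c : C) :
    toWreath S hε hσ (root i j c) = wreathRoot S σ hε i j c :=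
  lift_root _ _ _ _ hij c

theorem toWreath_right (w : SteinbergGroup n C) :
    (toWreath S hε hσ w).right = toGL (map ε w) := by
  induction w using induction_on with
  | one => simp
  | root i j hij c => rw [toWreath_root S hε hσ hij, wreathRoot_right, map_root, toGL_root]
  | mul x y hx hy => rw [map_mul, RegularWreathProduct.mul_right, hx, hy, map_mul, map_mul]

theorem toWreath_map_left {δ : A →+* A} (hδ : ∀ α, algebraMap A C (δ α) = ε (algebraMap A C α))
    (hσδ : ∀ α, σ ⟨algebraMap A C α - ε (algebraMap A C α), hε _⟩ = α - δ α)
    (z q : SteinbergGroup n A) :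
    (toWreath S hε hσ (map (algebraMap A C) z)).left (toGL (map (algebraMap A C) q))⁻¹ =
      MulAut.conj q (z * (map δ z)⁻¹) := by
  induction z using induction_on generalizing q with
  | one => simp
  | root i j hij α =>
    rw [map_root, toWreath_root S hε hσ hij, wreathRoot_left_inv, relRoot_toGL_map S σ hij, hσδ,
      map_root, sub_eq_add_neg, root_add, root_neg]
  | mul x y hx hy =>
    have hcomp : map ε (map (algebraMap A C) x) = map (algebraMap A C) (map δ x) := by
      rw [map_map, map_map]
      exact congrArg (map · x) (RingHom.ext fun α ↦ (hδ α).symm)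
    rw [map_mul, map_mul, wreath_mul_left_inv, hx, toWreath_right, hcomp, ← map_mul, ← map_mul, hy,
      map_mul (map δ)]
    simp only [MulAut.conj_apply]
    group

theorem map_toWreath_left (w q : SteinbergGroup n C) :
    map (algebraMap A C) ((toWreath S hε hσ w).left (toGL q)⁻¹) =
      MulAut.conj q (w * (map ε w)⁻¹) := by
  induction w using induction_on generalizing q with
  | one => simp
  | root i j hij c =>
    rw [toWreath_root S hε hσ hij, wreathRoot_left_inv, map_relRoot S σ hσ hij, map_root,
      ← root_neg, ← root_add, ← sub_eq_add_neg]
  | mul x y hx hy =>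
    rw [map_mul, wreath_mul_left_inv, map_mul, hx, toWreath_right, ← map_mul, hy, map_mul (map ε)]
    simp only [MulAut.conj_apply]
    group

theorem map_toWreath_left_eq_one {B : Type} [CommRing B] {p : A →+* B} (hp : ∀ s, p (σ s) = 0)
    (w : SteinbergGroup n C) (h : GL (Fin n) C) : map p ((toWreath S hε hσ w).left h⁻¹) = 1 := by
  induction w using induction_on generalizing h with
  | one => simp
  | root i j hij c =>
    rw [toWreath_root S hε hσ hij, wreathRoot_left_inv, map_relRoot_eq_one S σ h hp]
  | mul x y hx hy => rw [map_mul, wreath_mul_left_inv, map_mul, hx, hy, one_mul]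

end Wreath

/-! ### Relative subgroups of retracts -/

section Retract

variable {A B C D : Type} [CommRing A] [CommRing B] [CommRing C] [CommRing D] [Algebra A C]
  {p : A →+* B} {ι : B →+* A} {q : C →+* D} {κ : D →+* C}

theorem exists_linearMap_ker_of_bijOn
    (hker : Set.BijOn (algebraMap A C) (RingHom.ker p) (RingHom.ker q)) :
    ∃ σ : RingHom.ker q →ₗ[A] A, (∀ s, algebraMap A C (σ s) = s) ∧ ∀ s, p (σ s) = 0 := by
  choose σ hpσ hσ using fun s : RingHom.ker q ↦ hker.surjOn s.2
  refine ⟨⟨⟨σ, fun s t ↦ ?_⟩, fun α s ↦ ?_⟩, hσ, hpσ⟩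
  · refine hker.injOn (hpσ _) (add_mem (hpσ s) (hpσ t)) ?_
    rw [hσ, map_add, hσ, hσ]
    rfl
  · refine hker.injOn (hpσ _) (Ideal.mul_mem_left _ α (hpσ s)) ?_
    change algebraMap A C (σ (α • s)) = algebraMap A C (α * σ s)
    rw [hσ, map_mul, hσ, ← Algebra.smul_def]
    rfl

theorem sub_mem_ker_of_comp_eq_id (hκ : q.comp κ = RingHom.id D) (c : C) :
    c - κ.comp q c ∈ RingHom.ker q := by
  rw [RingHom.mem_ker, map_sub, RingHom.comp_apply, ← RingHom.comp_apply q κ, hκ, RingHom.id_apply,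
    sub_self]

variable {n : ℕ} [Fact (4 ≤ n)] (S : Submonoid A) [IsLocalization S C]
  (hι : p.comp ι = RingHom.id B) (hκ : q.comp κ = RingHom.id D)
  (hcomp : (algebraMap A C).comp (ι.comp p) = (κ.comp q).comp (algebraMap A C))
  (hker : Set.BijOn (algebraMap A C) (RingHom.ker p) (RingHom.ker q))
include S hκ hker

include hι hcomp in
theorem injOn_map_ker :
    Set.InjOn (map (n := n) (algebraMap A C)) (map p : SteinbergGroup n A →* _).ker := by
  obtain ⟨σ, hσ, hpσ⟩ := exists_linearMap_ker_of_bijOn hker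
  have hε := sub_mem_ker_of_comp_eq_id hκ
  have hδ (α : A) := RingHom.congr_fun hcomp α
  have hσδ (α : A) : σ ⟨algebraMap A C α - κ.comp q (algebraMap A C α), hε _⟩ = α - ι.comp p α := by
    refine hker.injOn (hpσ _) (sub_mem_ker_of_comp_eq_id hι α) ?_
    rw [hσ, map_sub]
    exact congrArg _ (hδ α).symm
  have hleft {z : SteinbergGroup n A} (hz : map p z = 1) :
      (toWreath S hε hσ (map (algebraMap A C) z)).left 1 = z := by
    simpa [← map_map, hz] using toWreath_map_left S hε hσ hδ hσδ z 1
  intro z hz z' hz' hzz'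
  rw [← hleft hz, hzz', hleft hz']

theorem surjOn_map_ker :
    Set.SurjOn (map (n := n) (algebraMap A C)) (map p : SteinbergGroup n A →* _).ker
      (map q : SteinbergGroup n C →* _).ker := by
  obtain ⟨σ, hσ, hpσ⟩ := exists_linearMap_ker_of_bijOn hker
  have hε := sub_mem_ker_of_comp_eq_id hκ
  intro w hw
  refine ⟨(toWreath S hε hσ w).left 1⁻¹, map_toWreath_left_eq_one S hε hσ hpσ w 1, ?_⟩
  have hw : map q w = 1 := hw
  simpa [← map_map, hw] using map_toWreath_left S hε hσ w 1

end Retract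

end SteinbergGroup

open SteinbergGroup in
theorem stmt18_general {n : ℕ} (hn : 4 ≤ n) {A B C D : Type} [CommRing A] [CommRing B] [CommRing C]
    [CommRing D] [Algebra A C] (S : Submonoid A) [IsLocalization S C]
    {p : A →+* B} {ι : B →+* A} (hι : p.comp ι = RingHom.id B)
    {q : C →+* D} {κ : D →+* C} (hκ : q.comp κ = RingHom.id D)
    (hcomp : (algebraMap A C).comp (ι.comp p) = (κ.comp q).comp (algebraMap A C))
    (hker : Set.BijOn (algebraMap A C) (RingHom.ker p) (RingHom.ker q))
    {pSt : SteinbergGroup n A →* SteinbergGroup n B}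
    (hp : ∀ i j hij x, pSt (stx n A i j hij x) = stx n B i j hij (p x))
    {fSt : SteinbergGroup n A →* SteinbergGroup n C}
    (hf : ∀ i j hij x, fSt (stx n A i j hij x) = stx n C i j hij (algebraMap A C x))
    {qSt : SteinbergGroup n C →* SteinbergGroup n D}
    (hq : ∀ i j hij x, qSt (stx n C i j hij x) = stx n D i j hij (q x))
    (ρ : pSt.ker →* qSt.ker) (hρ : ∀ g : pSt.ker, (ρ g : SteinbergGroup n C) = fSt g) :
    Function.Bijective ρ := by
  have : Fact (4 ≤ n) := ⟨hn⟩
  obtain rfl := eq_map hp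
  obtain rfl := eq_map hf
  obtain rfl := eq_map hq
  refine ⟨fun z z' hzz' ↦ ?_, fun w ↦ ?_⟩
  · refine Subtype.ext (injOn_map_ker S hι hκ hcomp hker z.2 z'.2 ?_)
    rw [← hρ, ← hρ, hzz']
  · obtain ⟨z, hz, hzw⟩ := surjOn_map_ker S hκ hker w.2
    exact ⟨⟨z, hz⟩, Subtype.ext ((hρ _).trans hzw)⟩

namespace fiberRing

open Polynomial

variable (R : Type) [CommRing R] (a : R)

/-- The structure map is the projection `μ : (r, h) ↦ h`. -/
noncomputable instance : Algebra (fiberRing R a) (Localization.Away a)[X] :=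
  ((RingHom.snd _ _).comp (fiberRing R a).subtype).toAlgebra

/-- The projection `p : (r, h) ↦ r`. -/
noncomputable def fst : fiberRing R a →+* R :=
  (RingHom.fst _ _).comp (fiberRing R a).subtype

/-- The section `r ↦ (r, λ_a r)` of the projection `p`, with a constant polynomial as second
component. -/
noncomputable def const : R →+* fiberRing R a :=
  ((RingHom.id R).prod (C.comp (algebraMap R (Localization.Away a)))).codRestrict _ fun r ↦
    eval_C (x := 0) (a := algebraMap R (Localization.Away a) r)

variable {R a}

theorem eval_algebraMap (x : fiberRing R a) :
    eval 0 (algebraMap (fiberRing R a) (Localization.Away a)[X] x) =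
      algebraMap R (Localization.Away a) (fst R a x) :=
  x.2

theorem fst_comp_const : (fst R a).comp (const R a) = RingHom.id R :=
  rfl

theorem ext {x y : fiberRing R a} (hfst : fst R a x = fst R a y)
    (hsnd : algebraMap (fiberRing R a) (Localization.Away a)[X] x = algebraMap _ _ y) : x = y :=
  Subtype.ext (Prod.ext hfst hsnd)

theorem exists_of_eval_eq {f : (Localization.Away a)[X]} {r : R}
    (h : eval 0 f = algebraMap R (Localization.Away a) r) :
    ∃ x : fiberRing R a, fst R a x = r ∧ algebraMap _ _ x = f :=
  ⟨⟨(r, f), h⟩, rfl, rfl⟩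

instance : IsLocalization ((Submonoid.powers a).map (const R a)) (Localization.Away a)[X] where
  map_units := by
    rintro ⟨_, r, hr, rfl⟩
    exact (IsLocalization.map_units (Localization.Away a) (⟨r, hr⟩ : Submonoid.powers a)).map C
  surj f := by
    obtain ⟨⟨r, t⟩, hrt⟩ := IsLocalization.surj (Submonoid.powers a) (eval 0 f)
    obtain ⟨x, -, hx⟩ := exists_of_eval_eq (a := a) (r := r)
      (f := f * C (algebraMap R (Localization.Away a) t)) (by rw [eval_mul, eval_C, hrt])
    exact ⟨(x, ⟨const R a t, t, t.2, rfl⟩), hx.symm⟩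
  exists_of_eq {x y} hxy := by
    have hfst : algebraMap R (Localization.Away a) (fst R a x) = algebraMap R _ (fst R a y) := by
      rw [← eval_algebraMap, ← eval_algebraMap, hxy]
    obtain ⟨t, ht⟩ := (IsLocalization.eq_iff_exists (Submonoid.powers a) _).1 hfst
    refine ⟨⟨const R a t, t, t.2, rfl⟩, ext ?_ ?_⟩
    · exact ht
    · rw [map_mul, map_mul, hxy]

theorem bijOn_algebraMap_ker :
    Set.BijOn (algebraMap (fiberRing R a) (Localization.Away a)[X]) (RingHom.ker (fst R a))
      (RingHom.ker (evalRingHom (0 : Localization.Away a))) := by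
  refine ⟨fun x hx ↦ ?_, fun x hx y hy hxy ↦ ext (hx.trans hy.symm) hxy, fun f hf ↦ ?_⟩
  · exact (eval_algebraMap x).trans (by rw [(hx : fst R a x = 0), map_zero])
  · exact exists_of_eval_eq (hf.trans (map_zero _).symm)

theorem algebraMap_comp_const_comp_fst :
    (algebraMap (fiberRing R a) (Localization.Away a)[X]).comp ((const R a).comp (fst R a)) =
      (C.comp (evalRingHom 0)).comp (algebraMap _ _) :=
  RingHom.ext fun x ↦ congrArg C (eval_algebraMap x).symm

theorem evalRingHom_comp_C {A : Type*} [CommRing A] (x : A) :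
    (evalRingHom x).comp C = RingHom.id A :=
  RingHom.ext fun _ ↦ eval_C

end fiberRing

theorem stmt18 (n : ℕ) (hn : 4 ≤ n) (R : Type) [CommRing R]
    (a : R) (ha : ¬ IsNilpotent a)
    (pSt : SteinbergGroup n (fiberRing R a) →* SteinbergGroup n R)
    (hp : ∀ (i j : Fin n) (hij : i ≠ j) (x : fiberRing R a),
      pSt (stx n (fiberRing R a) i j hij x) = stx n R i j hij x.val.1)
    (μSt : SteinbergGroup n (fiberRing R a) →*
      SteinbergGroup n (Polynomial (Localization.Away a)))
    (hμ : ∀ (i j : Fin n) (hij : i ≠ j) (x : fiberRing R a),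
      μSt (stx n (fiberRing R a) i j hij x) =
        stx n (Polynomial (Localization.Away a)) i j hij x.val.2)
    (ev0 : SteinbergGroup n (Polynomial (Localization.Away a)) →*
      SteinbergGroup n (Localization.Away a))
    (hev0 : ∀ (i j : Fin n) (hij : i ≠ j) (p : Polynomial (Localization.Away a)),
      ev0 (stx n (Polynomial (Localization.Away a)) i j hij p) =
        stx n (Localization.Away a) i j hij (Polynomial.eval 0 p))
    (ρ : pSt.ker →* ev0.ker)
    (hρ : ∀ g : pSt.ker,
      (ρ g : SteinbergGroup n (Polynomial (Localization.Away a))) =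
        μSt (g : SteinbergGroup n (fiberRing R a))) :
    Function.Bijective ρ :=
  stmt18_general hn ((Submonoid.powers a).map (fiberRing.const R a)) fiberRing.fst_comp_const
    (fiberRing.evalRingHom_comp_C 0) fiberRing.algebraMap_comp_const_comp_fst
    fiberRing.bijOn_algebraMap_ker hp hμ hev0 ρ hρ
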